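/- arXiv:1207.1481 — 5 statements merged into one kernel-verified Lean document; each statement's English description precedes it below -/
import Mathlib

section
/- Let f be an orientation-preserving C^1 circle diffeomorphism whose derivative has bounded variation and whose rotation number is irrational, let λ be the normalized Lebesgue measure on the circle, and let u be a C^1 real-valued function on the circle with ∫ u dμ = 0, where μ is the unique f-invariant probability measure. Then there exists a sequence of continuous real-valued functions w_n on the circle such that (w_n ∘ f)·Df − w_n converges uniformly to u′ and ∫ w_n dλ = 0 for every n. -/
/-!
Write `T w = (w ∘ f) · Df`, and call `T w - w`, with `w` continuous, a coboundary. Since `u'` has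
zero Lebesgue mean, it is enough to show that every continuous function `φ` of zero Lebesgue mean is
a uniform limit of coboundaries of functions of zero mean. Functions on the circle are handled as
`1`-periodic functions on the line, and `f` through its lift `F`.

*Averaging.* Modulo coboundaries, `φ` equals `T ^ k φ = (φ ∘ f ^ k) · D(f ^ k)` for every `k`, and
so equals the average over `s < N` of `R ∘ f ^ (-s)`, where
`R = ∑_{k < N} T ^ k φ / ∑_{k < N} D(f ^ k)` is a weighted mean of `φ` along an orbit segment
(`exists_le_of_ratio`). Hence `φ` can be made as small as `sup |R|` by adding a coboundary.

*Contraction.* Let `N = q` be the denominator of a good rational approximation of the rotation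
number. An interval `[x, x']` of combinatorial length about `5 / q` has iterates of
bounded distortion up to time `q` (Denjoy, `exists_distortion`), so `D(f ^ k) x` is comparable, up
to a uniform factor `C`, to the length of its `k`-th image. These images contain intervals `K_k`
starting at `f ^ k x` which together cover the circle exactly twice, so that `∑ ∫_{K_k} φ = 0`;
the `K_k` are short when `q` is large (`exists_small`, a quantitative form of Denjoy's theorem), so
`φ` is nearly constant on each. Therefore a definite proportion of the weights in `R` contributes
almost nothing, and `sup |R| ≤ θ sup |φ|` with `θ < 1` depending only on `f`
(`exists_contraction`). What remains of `φ` is again of zero mean, because `∫ T w = ∫ w`, and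
iterating gives coboundaries converging uniformly to `φ` (`exists_approx`).

*Mean of `w`.* The function `v = (1 / q) ∑_{k < q} D(f ^ k)` has mean `1` and
`T v - v = (D(f ^ q) - 1) / q`, which is uniformly small by Denjoy's inequality
(`exists_jac_bound`). Subtracting the right multiple of `v` gives `w` zero mean
(`exists_approx_mean_zero`).
-/

open MeasureTheory Function Filter Set
open scoped Topology

noncomputable section

/-- The circle `ℝ/ℤ`. -/
abbrev 𝕊 : Type := UnitAddCircle

/-- An orientation-preserving `C¹` diffeomorphism of the circle `ℝ/ℤ`, described by a lift
`F : ℝ → ℝ` (a `C¹` map commuting with the unit translation, with everywhere positive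
derivative, admitting a `C¹` inverse). -/
structure C1Diffeo : Type where
  F : ℝ → ℝ
  Finv : ℝ → ℝ
  contDiff : ContDiff ℝ 1 F
  contDiff_inv : ContDiff ℝ 1 Finv
  deriv_pos : ∀ x, 0 < deriv F x
  map_add_one : ∀ x, F (x + 1) = F x + 1
  left_inv : Function.LeftInverse Finv F
  right_inv : Function.RightInverse Finv F

/-- If a map `ℝ → ℝ` commutes with the unit translation, so do its iterates. -/
lemma iterate_map_add_one {G : ℝ → ℝ} (h : ∀ x, G (x + 1) = G x + 1) (n : ℕ) (x : ℝ) :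
    G^[n] (x + 1) = G^[n] x + 1 := by
  induction n with
  | zero => simp
  | succ n ih => rw [Function.iterate_succ_apply', Function.iterate_succ_apply', ih, h]

/-- The derivative of a periodic function is periodic. -/
lemma Function.Periodic.deriv' {G : ℝ → ℝ} (h : Function.Periodic G 1) :
    Function.Periodic (deriv G) 1 := by
  intro x
  have h2 : (fun y => G (y + 1)) = G := funext h
  have h3 := congrArg (fun k : ℝ → ℝ => deriv k x) h2
  simpa [deriv_comp_add_const] using h3

/-- The derivative of a map commuting with the unit translation is periodic. -/
lemma periodic_deriv_of_shift {G : ℝ → ℝ} (h : ∀ x, G (x + 1) = G x + 1) :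
    Function.Periodic (deriv G) 1 := by
  intro x
  have h2 : (fun y => G (y + 1)) = fun y => G y + 1 := funext h
  have h3 := congrArg (fun k : ℝ → ℝ => deriv k x) h2
  simpa [deriv_comp_add_const, deriv_add_const] using h3

namespace C1Diffeo

variable (f : C1Diffeo)

lemma inv_map_add_one : ∀ x, f.Finv (x + 1) = f.Finv x + 1 := fun x => by
  conv_lhs => rw [← f.right_inv x]
  rw [← f.map_add_one, f.left_inv]

/-- Lift of the `n`-th iterate of `f`, `n : ℤ`. -/
def iterZ : ℤ → ℝ → ℝ
  | Int.ofNat n => f.F^[n]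
  | Int.negSucc n => f.Finv^[n + 1]

lemma iterZ_map_add_one (n : ℤ) (x : ℝ) : f.iterZ n (x + 1) = f.iterZ n x + 1 := by
  cases n with
  | ofNat n => exact iterate_map_add_one f.map_add_one n x
  | negSucc n => exact iterate_map_add_one f.inv_map_add_one (n + 1) x

/-- The induced self-map of the circle. -/
def toCircle : 𝕊 → 𝕊 :=
  Function.Periodic.lift (f := fun x : ℝ => ((f.F x : ℝ) : 𝕊)) (fun x => by
    show ((f.F (x + 1) : ℝ) : 𝕊) = ((f.F x : ℝ) : 𝕊)
    rw [f.map_add_one]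
    exact AddCircle.coe_add_period 1 (f.F x))

/-- The `n`-th iterate (`n : ℤ`) of the induced self-map of the circle. -/
def mapZ (n : ℤ) : 𝕊 → 𝕊 :=
  Function.Periodic.lift (f := fun x : ℝ => ((f.iterZ n x : ℝ) : 𝕊)) (fun x => by
    show ((f.iterZ n (x + 1) : ℝ) : 𝕊) = ((f.iterZ n x : ℝ) : 𝕊)
    rw [f.iterZ_map_add_one]
    exact AddCircle.coe_add_period 1 (f.iterZ n x))

/-- The derivative `Df`, as a function on the circle. -/
def Df : 𝕊 → ℝ := (periodic_deriv_of_shift f.map_add_one).lift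

/-- The derivative `D(fⁿ)` of the `n`-th iterate (`n : ℕ`), as a function on the circle. -/
def DfIter (n : ℕ) : 𝕊 → ℝ :=
  (periodic_deriv_of_shift (iterate_map_add_one f.map_add_one n)).lift

/-- The derivative `D(fⁿ)` of the `n`-th iterate (`n : ℤ`), as a function on the circle. -/
def DfZ (n : ℤ) : 𝕊 → ℝ := (periodic_deriv_of_shift (f.iterZ_map_add_one n)).lift

/-- The lift, as a degree one monotone map of the real line. -/
def deg1 : CircleDeg1Lift :=
  ⟨⟨f.F, (strictMono_of_deriv_pos f.deriv_pos).monotone⟩, f.map_add_one⟩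

/-- The rotation number of `f` (the translation number of the given lift). -/
def rot : ℝ := f.deg1.translationNumber

end C1Diffeo

/-- The lift to `ℝ` of a function on the circle. -/
def lft (u : 𝕊 → ℝ) : ℝ → ℝ := fun x => u ↑x

lemma lft_periodic (u : 𝕊 → ℝ) : Function.Periodic (lft u) 1 := fun x => by
  simp only [lft]
  rw [AddCircle.coe_add_period]

/-- A function on the circle is `C¹` if its lift to `ℝ` is `C¹`. -/
def IsC1 (u : 𝕊 → ℝ) : Prop := ContDiff ℝ 1 (lft u)

/-- The derivative of a function on the circle (the descent of the derivative
of its lift). -/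
def derivS (u : 𝕊 → ℝ) : 𝕊 → ℝ := ((lft_periodic u).deriv').lift

/-- The `C¹` norm of a function on the circle. -/
def c1Norm (u : 𝕊 → ℝ) : ℝ := (⨆ x : 𝕊, |u x|) + ⨆ x : 𝕊, |derivS u x|

/-- The space of `C¹` real functions on the circle, as a subspace of all functions. -/
def C1Sub : Submodule ℝ (𝕊 → ℝ) where
  carrier := {u | IsC1 u}
  add_mem' := fun hu hv => by
    simp only [Set.mem_setOf_eq, IsC1] at *
    exact hu.add hv
  zero_mem' := by
    simp only [Set.mem_setOf_eq, IsC1]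
    exact contDiff_const
  smul_mem' := fun c u hu => by
    simp only [Set.mem_setOf_eq, IsC1] at *
    exact hu.const_smul c

/-- A (continuous) `1`-distribution on the circle: a linear functional on the space of `C¹`
functions which is bounded with respect to the `C¹` norm. -/
def IsDistribution (L : C1Sub →ₗ[ℝ] ℝ) : Prop :=
  ∃ C : ℝ, ∀ u : C1Sub, |L u| ≤ C * c1Norm (u : 𝕊 → ℝ)

/-- Invariance of a `1`-distribution under a circle diffeomorphism: `L (u ∘ f) = L u`. -/
def InvariantUnder (f : C1Diffeo) (L : C1Sub →ₗ[ℝ] ℝ) : Prop :=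
  ∀ u v : C1Sub, (∀ x, (v : 𝕊 → ℝ) x = (u : 𝕊 → ℝ) (f.toCircle x)) → L v = L u

/-- `K` is a minimal invariant Cantor set for the circle diffeomorphism `f`: a nonempty
perfect totally disconnected invariant set in which every (full) orbit is dense. -/
def IsMinimalInvariantCantor (f : C1Diffeo) (K : Set 𝕊) : Prop :=
  K.Nonempty ∧ Perfect K ∧ IsTotallyDisconnected K ∧
    f.toCircle '' K = K ∧
    ∀ x ∈ K, closure (Set.range fun n : ℤ => f.mapZ n x) = K

/-- The total mass `S = Σ_{n ∈ ℤ} D(fⁿ)(x₀)` of the derivatives along the orbit of `x₀`. -/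
def orbitSum (f : C1Diffeo) (x₀ : 𝕊) : ℝ := ∑' n : ℤ, f.DfZ n x₀

/-- The atomic measure `ν = S⁻¹ Σ_{n ∈ ℤ} D(fⁿ)(x₀) · δ_{fⁿ(x₀)}` on the circle. -/
def orbitMeasure (f : C1Diffeo) (x₀ : 𝕊) : Measure 𝕊 :=
  (ENNReal.ofReal (orbitSum f x₀))⁻¹ •
    Measure.sum fun n : ℤ => ENNReal.ofReal (f.DfZ n x₀) • Measure.dirac (f.mapZ n x₀)

/-! ### Iterates of the lift and their derivatives -/

namespace KeyProp

variable (f : C1Diffeo)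

/-- The derivative of the `n`-th iterate of the lift, written as a product along the orbit. -/
def jac (n : ℕ) (x : ℝ) : ℝ := ∏ i ∈ Finset.range n, deriv f.F (f.F^[i] x)

lemma hasDerivAt_lift (x : ℝ) : HasDerivAt f.F (deriv f.F x) x :=
  ((f.contDiff.differentiable one_ne_zero) x).hasDerivAt

lemma continuous_lift : Continuous f.F := f.contDiff.continuous

lemma continuous_deriv_lift : Continuous (deriv f.F) := f.contDiff.continuous_deriv le_rfl

lemma continuous_iter (n : ℕ) : Continuous f.F^[n] := (continuous_lift f).iterate n

lemma strictMono_iter (n : ℕ) : StrictMono f.F^[n] :=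
  (strictMono_of_deriv_pos f.deriv_pos).iterate n

lemma jac_zero (x : ℝ) : jac f 0 x = 1 := by simp [jac]

lemma jac_succ (n : ℕ) (x : ℝ) : jac f (n + 1) x = jac f n x * deriv f.F (f.F^[n] x) :=
  Finset.prod_range_succ _ _

lemma jac_succ' (n : ℕ) (x : ℝ) : jac f (n + 1) x = jac f n (f.F x) * deriv f.F x := by
  simp [jac, Finset.prod_range_succ']

lemma jac_pos (n : ℕ) (x : ℝ) : 0 < jac f n x :=
  Finset.prod_pos fun _ _ => f.deriv_pos _

lemma jac_add (m n : ℕ) (x : ℝ) : jac f (m + n) x = jac f m x * jac f n (f.F^[m] x) := by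
  simp only [jac, Finset.prod_range_add, ← Function.iterate_add_apply]
  simp only [Nat.add_comm]

lemma hasDerivAt_iter (n : ℕ) (x : ℝ) : HasDerivAt f.F^[n] (jac f n x) x := by
  induction n with
  | zero => simpa [jac_zero] using hasDerivAt_id x
  | succ n ih =>
    rw [jac_succ, Function.iterate_succ', mul_comm]
    exact (hasDerivAt_lift f _).comp x ih

lemma continuous_jac (n : ℕ) : Continuous (jac f n) :=
  continuous_finsetProd _ fun i _ => (continuous_deriv_lift f).comp (continuous_iter f i)

lemma add_int_of_add_one {v : ℝ → ℝ} {V : ℝ} (hv : ∀ x, v (x + 1) = v x + V) (x : ℝ) (m : ℤ) :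
    v (x + m) = v x + m * V := by
  induction m using Int.induction_on with
  | zero => simp
  | succ i ih =>
    push_cast at ih ⊢
    rw [← add_assoc, hv, ih]; ring
  | pred i ih =>
    push_cast at ih ⊢
    have := hv (x + (-i - 1))
    rw [show x + (-(i : ℝ) - 1) + 1 = x + -i by ring, ih] at this
    linarith

lemma sub_int_of_add_one {v : ℝ → ℝ} {V : ℝ} (hv : ∀ x, v (x + 1) = v x + V) (x : ℝ) (m : ℤ) :
    v (x - m) = v x - m * V := by
  have := add_int_of_add_one hv x (-m)
  push_cast at this
  rw [sub_eq_add_neg, this]; ring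

lemma iter_sub_int (n : ℕ) (x : ℝ) (m : ℤ) : f.F^[n] (x - m) = f.F^[n] x - m := by
  simpa using sub_int_of_add_one (iterate_map_add_one f.map_add_one n) x m

lemma jac_add_one (n : ℕ) (x : ℝ) : jac f n (x + 1) = jac f n x := by
  refine Finset.prod_congr rfl fun i _ => ?_
  rw [iterate_map_add_one f.map_add_one]
  exact periodic_deriv_of_shift f.map_add_one _

lemma jac_sub_int (n : ℕ) (x : ℝ) (m : ℤ) : jac f n (x - m) = jac f n x := by
  simpa using sub_int_of_add_one (V := 0) (by simpa using jac_add_one f n) x m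

/-- Mean value theorem for iterates. -/
lemma exists_jac_mul (n : ℕ) {a b : ℝ} (hab : a < b) :
    ∃ z ∈ Ioo a b, f.F^[n] b - f.F^[n] a = jac f n z * (b - a) := by
  obtain ⟨z, hz, h⟩ := exists_hasDerivAt_eq_slope f.F^[n] (jac f n) hab
    (continuous_iter f n).continuousOn fun x _ => hasDerivAt_iter f n x
  refine ⟨z, hz, ?_⟩
  rw [h, div_mul_cancel₀ _ (sub_pos.2 hab).ne']

/-! ### Combinatorics of orbits -/

/-- The points of an orbit of the lift, and their integer translates, are ordered like the
corresponding points `n α + m` for the translation by the rotation number `α`. -/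
lemma iter_lt_iter {n n' : ℕ} {m : ℤ} (h : 0 < ((n' : ℝ) - n) * f.rot - m) (x : ℝ) :
    f.F^[n] x < f.F^[n'] x - m := by
  have key : ∀ (d : ℕ) (y : ℝ), (f.deg1 ^ d) y = f.F^[d] y := fun d y => by
    rw [CircleDeg1Lift.coe_pow]; rfl
  rcases le_total n n' with hn | hn
  · obtain ⟨d, rfl⟩ := Nat.exists_eq_add_of_le hn
    have h1 : (m : ℝ) < (f.deg1 ^ d).translationNumber := by
      rw [CircleDeg1Lift.translationNumber_pow]
      push_cast at h
      change 0 < _ * f.deg1.translationNumber - _ at h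
      linarith
    have h2 := CircleDeg1Lift.lt_map_of_int_lt_translationNumber _ h1 (f.F^[n] x)
    rw [key, ← Function.iterate_add_apply, Nat.add_comm] at h2
    linarith
  · obtain ⟨d, rfl⟩ := Nat.exists_eq_add_of_le hn
    have h1 : (f.deg1 ^ d).translationNumber < ((-m : ℤ) : ℝ) := by
      rw [CircleDeg1Lift.translationNumber_pow]
      push_cast at h ⊢
      change 0 < _ * f.deg1.translationNumber - _ at h
      linarith
    have h2 := CircleDeg1Lift.map_lt_of_translationNumber_lt_int _ h1 (f.F^[n'] x)
    rw [key, ← Function.iterate_add_apply, Nat.add_comm] at h2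
    push_cast at h2
    linarith

/-- `p / q` is a rational approximation of `α` in lowest terms with `|α - p / q| < 1 / q ^ 2`. -/
structure Good (α : ℝ) (p : ℤ) (q : ℕ) : Prop where
  pos : 0 < q
  coprime : IsCoprime p (q : ℤ)
  approx : |q * α - p| * q < 1

lemma exists_good {α : ℝ} (hα : Irrational α) (Q : ℕ) : ∃ p q, Q < q ∧ Good α p q := by
  have hev : ∀ d ∈ Finset.Icc 1 Q, ∀ᶠ n : ℕ in atTop, 1 / ((n : ℝ) + 1) < |d * α - round (d * α)| := by
    intro d hd
    have hd' : d ≠ 0 := by have := (Finset.mem_Icc.1 hd).1; omega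
    refine tendsto_one_div_add_atTop_nhds_zero_nat.eventually_lt_const (abs_pos.2 (sub_ne_zero.2 ?_))
    exact (hα.natCast_mul hd').ne_int _
  obtain ⟨n, hn, hn0⟩ := (((Finset.eventually_all _).2 hev).and (eventually_gt_atTop 0)).exists
  obtain ⟨r, hr, hrn⟩ := Real.exists_rat_abs_sub_le_and_den_le α hn0
  have hdpos : (0 : ℝ) < r.den := by exact_mod_cast r.den_pos
  have hnpos : (0 : ℝ) < n := by exact_mod_cast hn0
  have h1 : |r.den * α - r.num| ≤ 1 / ((n : ℝ) + 1) := by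
    have e : r.den * α - r.num = r.den * (α - r) := by
      rw [mul_sub, ← Rat.cast_natCast, ← Rat.cast_mul, Rat.den_mul_eq_num]; simp
    rw [e, abs_mul, abs_of_pos hdpos]
    calc _ ≤ (r.den : ℝ) * (1 / (((n : ℝ) + 1) * r.den)) := by gcongr
      _ = _ := by field_simp
  refine ⟨r.num, r.den, ?_, r.den_pos, ?_, ?_⟩
  · by_contra! hle
    have := hn r.den (Finset.mem_Icc.2 ⟨r.den_pos, hle⟩)
    have h2 := round_le (r.den * α) r.num
    linarith
  · exact Rat.isCoprime_num_den r
  · have : (r.den : ℝ) ≤ n := by exact_mod_cast hrn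
    calc _ ≤ 1 / ((n : ℝ) + 1) * n := by gcongr
      _ < 1 := by rw [one_div_mul_eq_div, div_lt_one (by positivity)]; linarith

section combinatorics

variable {p : ℤ} {q : ℕ}

lemma Good.bounds {α : ℝ} (hg : Good α p q) {a b : ℕ} (ha : a < q) (hb : b < q) {m s : ℤ}
    (h : a * p - b * p - m * q = s) :
    (s : ℝ) - 1 < q * (((a : ℝ) - b) * α - m) ∧ q * (((a : ℝ) - b) * α - m) < s + 1 := by
  have h' : (a : ℝ) * p - b * p - m * q = s := by exact_mod_cast h
  have e : q * (((a : ℝ) - b) * α - m) - s = (a - b) * (q * α - p) := by rw [← h']; ring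
  have hab : |(a : ℝ) - b| ≤ q := by
    have h1 : (a : ℝ) < q := by exact_mod_cast ha
    have h2 : (b : ℝ) < q := by exact_mod_cast hb
    rw [abs_le]; constructor <;> linarith [(Nat.cast_nonneg a : (0 : ℝ) ≤ a), (Nat.cast_nonneg b : (0 : ℝ) ≤ b)]
  have : |((a : ℝ) - b) * (q * α - p)| < 1 := by
    rw [abs_mul, mul_comm]
    exact (mul_le_mul_of_nonneg_left hab (abs_nonneg _)).trans_lt hg.approx
  rw [← e, abs_lt] at this
  constructor <;> linarith [this.1, this.2]

/-- For the rotation by `p / q`, moving each of the `q` points of an orbit forward by `s` places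
is a permutation of the orbit. -/
lemma Good.exists_perm {α : ℝ} (hg : Good α p q) (s : ℤ) :
    ∃ (σ : Equiv.Perm (Fin q)) (m : Fin q → ℤ),
      ∀ j, ((σ j : ℕ) : ℤ) * p - (j : ℕ) * p - m j * q = s := by
  have : NeZero q := ⟨hg.pos.ne'⟩
  obtain ⟨u, v, huv⟩ := hg.coprime
  have hq : (0 : ℤ) < q := by exact_mod_cast hg.pos
  have hc0 : 0 ≤ (u * s) % q := Int.emod_nonneg _ hq.ne'
  have hcq : (u * s) % q < q := Int.emod_lt_of_pos _ hq
  let c : Fin q := ⟨((u * s) % q).toNat, by omega⟩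
  have hdvd : ∀ j : Fin q, (q : ℤ) ∣ ((Equiv.addRight c j : Fin q) : ℕ) * p - (j : ℕ) * p - s := by
    intro j
    have e : (((Equiv.addRight c j : Fin q) : ℕ) : ℤ) = ((j : ℕ) + (u * s) % q) % q := by
      simp only [Equiv.coe_addRight, Fin.val_add]
      push_cast
      rw [Int.toNat_of_nonneg hc0]
    rw [e, ← Int.modEq_zero_iff_dvd]
    have h1 : ((j : ℕ) + (u * s) % q) % q ≡ (j : ℕ) + u * s [ZMOD q] := by
      simp [Int.ModEq]
    have h2 : ((j : ℕ) + u * s) * p - (j : ℕ) * p - s ≡ 0 [ZMOD q] := by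
      rw [Int.modEq_zero_iff_dvd]
      exact ⟨-(v * s), by linear_combination s * huv⟩
    exact (((h1.mul_right p).sub_right _).sub_right _).trans h2
  choose m hm using hdvd
  exact ⟨Equiv.addRight c, m, fun j => by linear_combination hm j⟩

/-- In the cyclic order of `x, f x, …, f^{q-1} x`, each of these points has a successor `s` places
ahead, and a function increasing by `V` over a full turn increases by `s * V` in total when
every point moves to its successor. -/
lemma exists_steps (hg : Good f.rot p q) (s : ℤ) :
    ∃ (n : Fin q → ℕ) (m : Fin q → ℤ),
      (∀ j, (s : ℝ) - 1 < q * (((n j : ℝ) - (j : ℕ)) * f.rot - m j) ∧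
        q * (((n j : ℝ) - (j : ℕ)) * f.rot - m j) < s + 1) ∧
      ∀ (x : ℝ) (v : ℝ → ℝ) (V : ℝ), (∀ y, v (y + 1) = v y + V) →
        ∑ j, (v (f.F^[n j] x - m j) - v (f.F^[j] x)) = s * V := by
  obtain ⟨σ, m, h⟩ := hg.exists_perm s
  refine ⟨fun j => σ j, m, fun j => hg.bounds (σ j).2 j.2 (h j), fun x v V hv => ?_⟩
  have hq : (q : ℤ) ≠ 0 := by exact_mod_cast hg.pos.ne'
  have hsum : ∑ j, m j = -s := by
    have h1 := Finset.sum_congr rfl fun j (_ : j ∈ Finset.univ) => h j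
    have h2 : ∑ j, ((σ j : ℕ) : ℤ) * p = ∑ j : Fin q, ((j : ℕ) : ℤ) * p :=
      Equiv.sum_comp σ fun j => ((j : ℕ) : ℤ) * p
    simp only [Finset.sum_sub_distrib, h2, sub_self, zero_sub, ← Finset.sum_mul,
      Finset.sum_const, Finset.card_univ, Fintype.card_fin, nsmul_eq_mul] at h1
    apply mul_left_cancel₀ hq
    linear_combination -h1
  have h3 : ∑ j, v (f.F^[σ j] x) = ∑ j : Fin q, v (f.F^[j] x) :=
    Equiv.sum_comp σ fun j => v (f.F^[j] x)
  simp only [sub_int_of_add_one hv, Finset.sum_sub_distrib, h3, ← Finset.sum_mul]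
  have h4 : ∑ j, (m j : ℝ) = -s := by exact_mod_cast hsum
  rw [h4]; ring

/-- There is a combinatorial displacement `a α - b` of about `5 / q`. -/
lemma exists_shift {α : ℝ} (hg : Good α p q) :
    ∃ (a : ℕ) (b : ℤ), 4 < q * (a * α - b) ∧ q * (a * α - b) < 6 := by
  obtain ⟨σ, m, h⟩ := hg.exists_perm 5
  have := hg.bounds (σ ⟨0, hg.pos⟩).2 hg.pos (m := m ⟨0, hg.pos⟩) (s := 5) (by simpa using h ⟨0, hg.pos⟩)
  refine ⟨σ ⟨0, hg.pos⟩, m ⟨0, hg.pos⟩, ?_, ?_⟩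
  · have := this.1; norm_num at this; linarith
  · have := this.2; norm_num at this; linarith

end combinatorics

/-! ### Denjoy theory -/

/-- The total variation of a periodic function of bounded variation, counted from `0` and extended
to the whole line. -/
lemma exists_variation_periodic {g : ℝ → ℝ} (hp : Function.Periodic g 1)
    (hbv : BoundedVariationOn g (Icc 0 1)) :
    ∃ (v : ℝ → ℝ) (V : ℝ), (∀ y, v (y + 1) = v y + V) ∧
      ∀ x y, x ≤ y → |g y - g x| ≤ v y - v x := by
  have hl : LocallyBoundedVariationOn g (Icc 0 1) := hbv.locallyBoundedVariationOn
  set v₀ : ℝ → ℝ := variationOnFromTo g (Icc 0 1) 0 with hv₀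
  have h0 : (0 : ℝ) ∈ Icc (0 : ℝ) 1 := by simp
  have h1 : (1 : ℝ) ∈ Icc (0 : ℝ) 1 := by simp
  have hfr : ∀ x : ℝ, Int.fract x ∈ Icc (0 : ℝ) 1 := fun x =>
    ⟨Int.fract_nonneg x, (Int.fract_lt_one x).le⟩
  have key : ∀ s ∈ Icc (0 : ℝ) 1, ∀ t ∈ Icc (0 : ℝ) 1, s ≤ t → |g t - g s| ≤ v₀ t - v₀ s :=
    fun s hs t ht hst => variationOnFromTo.abs_sub_le_sub_of_le hl h0 hs ht hst
  have hz : v₀ 0 = 0 := variationOnFromTo.self _ _ _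
  have hgf : ∀ x, g x = g (Int.fract x) := fun x => by
    have := hp.sub_int_mul_eq ⌊x⌋ (x := x)
    rw [mul_one] at this
    exact this.symm
  have hg01 : g 1 = g 0 := by simpa using hp 0
  refine ⟨fun x => ⌊x⌋ * v₀ 1 + v₀ (Int.fract x), v₀ 1, fun y => ?_, fun x y hxy => ?_⟩
  · simp only [Int.floor_add_one, Int.fract_add_one]
    push_cast; ring
  · simp only
    rw [hgf x, hgf y]
    rcases (Int.floor_mono hxy).eq_or_lt with he | hlt
    · have hs : Int.fract x ≤ Int.fract y := by
        simp only [Int.fract, he]; linarith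
      have := key _ (hfr x) _ (hfr y) hs
      rw [he]; linarith
    · have hle : (⌊x⌋ : ℝ) + 1 ≤ ⌊y⌋ := by exact_mod_cast hlt
      have hV : 0 ≤ v₀ 1 := variationOnFromTo.nonneg_of_le _ _ zero_le_one
      have a1 := key _ (hfr x) _ h1 (hfr x).2
      have a2 := key _ h0 _ (hfr y) (hfr y).1
      have a3 : |g (Int.fract y) - g (Int.fract x)| ≤
          |g (Int.fract y) - g 0| + |g 1 - g (Int.fract x)| := by
        rw [hg01]; exact abs_sub_le _ _ _
      nlinarith

lemma exists_deriv_lower : ∃ c > 0, ∀ x, c ≤ deriv f.F x := by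
  obtain ⟨t, _, ht⟩ := isCompact_Icc.exists_isMinOn (nonempty_Icc.2 (zero_le_one' ℝ))
    (continuous_deriv_lift f).continuousOn
  refine ⟨deriv f.F t, f.deriv_pos t, fun x => ?_⟩
  have hp := periodic_deriv_of_shift f.map_add_one
  obtain ⟨y, hy, hxy⟩ := hp.exists_mem_Ico₀ one_pos x
  rw [hxy]
  exact ht ⟨hy.1, hy.2.le⟩

lemma abs_log_sub_log_le {c a b : ℝ} (hc : 0 < c) (ha : c ≤ a) (hb : c ≤ b) :
    |Real.log a - Real.log b| ≤ |a - b| / c := by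
  wlog hab : b ≤ a generalizing a b
  · rw [abs_sub_comm, abs_sub_comm a]
    exact this hb ha (le_of_not_ge hab)
  have hb0 := hc.trans_le hb
  have ha0 := hc.trans_le ha
  rw [abs_of_nonneg (sub_nonneg.2 (Real.log_le_log hb0 hab)), abs_of_nonneg (sub_nonneg.2 hab),
    ← Real.log_div ha0.ne' hb0.ne']
  calc Real.log (a / b) ≤ a / b - 1 := Real.log_le_sub_one_of_pos (by positivity)
    _ = (a - b) / b := by field_simp
    _ ≤ (a - b) / c := by
      have := sub_nonneg.2 hab
      gcongr

lemma exists_variation (hbv : BoundedVariationOn (deriv f.F) (Icc 0 1)) :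
    ∃ (v : ℝ → ℝ) (V : ℝ), (∀ y, v (y + 1) = v y + V) ∧
      ∀ x y, x ≤ y → |Real.log (deriv f.F y) - Real.log (deriv f.F x)| ≤ v y - v x := by
  obtain ⟨v, V, h1, h2⟩ := exists_variation_periodic (periodic_deriv_of_shift f.map_add_one) hbv
  obtain ⟨c, hc, hcF⟩ := exists_deriv_lower f
  refine ⟨fun x => v x / c, V / c, fun y => by simp only [h1]; ring,
    fun x y hxy => ?_⟩
  calc _ ≤ |deriv f.F y - deriv f.F x| / c := abs_log_sub_log_le hc (hcF y) (hcF x)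
    _ ≤ (v y - v x) / c := by gcongr; exact h2 x y hxy
    _ = _ := by ring

lemma log_jac (n : ℕ) (x : ℝ) :
    Real.log (jac f n x) = ∑ i ∈ Finset.range n, Real.log (deriv f.F (f.F^[i] x)) :=
  Real.log_prod fun _ _ => (f.deriv_pos _).ne'

/-- Denjoy's bounded distortion, up to time `q`, on intervals of combinatorial length `< 6 / q`:
the images of such an interval wrap around the circle at most eight times. -/
lemma exists_distortion (hbv : BoundedVariationOn (deriv f.F) (Icc 0 1)) :
    ∃ K : ℝ, ∀ (p : ℤ) (q : ℕ), Good f.rot p q → ∀ (a : ℕ) (b : ℤ), q * (a * f.rot - b) < 6 →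
      ∀ (x z : ℝ) (n : ℕ), x ≤ z → z ≤ f.F^[a] x - b → n ≤ q →
        |Real.log (jac f n z) - Real.log (jac f n x)| ≤ K := by
  obtain ⟨v, V, hv, hvar⟩ := exists_variation f hbv
  have hmono : Monotone v := fun x y hxy => sub_nonneg.1 ((abs_nonneg _).trans (hvar x y hxy))
  refine ⟨8 * V, fun p q hg a b hab x z n hxz hz hn => ?_⟩
  obtain ⟨k, m, hkm, hsum⟩ := exists_steps f hg 8
  have hq : (0 : ℝ) < q := by exact_mod_cast hg.pos
  have hz' : ∀ i : Fin q, f.F^[i] z ≤ f.F^[k i] x - m i := by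
    intro i
    have h1 : f.F^[i] z ≤ f.F^[i + a] x - b := by
      rw [Function.iterate_add_apply, ← iter_sub_int]
      exact (strictMono_iter f i).monotone hz
    have h2 : f.F^[i + a] x < f.F^[k i] x - (m i - b : ℤ) := by
      apply iter_lt_iter
      have := (hkm i).1
      push_cast at this ⊢
      apply pos_of_mul_pos_right _ hq.le
      linarith
    push_cast at h2
    linarith
  have hx : ∀ i : ℕ, f.F^[i] x ≤ f.F^[i] z := fun i => (strictMono_iter f i).monotone hxz
  rw [log_jac, log_jac, ← Finset.sum_sub_distrib]
  calc _ ≤ ∑ i ∈ Finset.range n, (v (f.F^[i] z) - v (f.F^[i] x)) :=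
        (Finset.abs_sum_le_sum_abs _ _).trans (Finset.sum_le_sum fun i _ => hvar _ _ (hx i))
    _ ≤ ∑ i ∈ Finset.range q, (v (f.F^[i] z) - v (f.F^[i] x)) :=
        Finset.sum_le_sum_of_subset_of_nonneg (Finset.range_mono hn)
          fun i _ _ => sub_nonneg.2 (hmono (hx i))
    _ = ∑ i : Fin q, (v (f.F^[i] z) - v (f.F^[i] x)) := Finset.sum_range _
    _ ≤ ∑ i : Fin q, (v (f.F^[k i] x - m i) - v (f.F^[i] x)) :=
        Finset.sum_le_sum fun i _ => sub_le_sub_right (hmono (hz' i)) _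
    _ = 8 * V := by rw [hsum x v V hv]; norm_num

/-- Denjoy's inequality: `log D(f ^ q)` is bounded, uniformly in `q`. -/
lemma exists_jac_bound (hbv : BoundedVariationOn (deriv f.F) (Icc 0 1)) :
    ∃ K : ℝ, ∀ (p : ℤ) (q : ℕ), Good f.rot p q → ∀ x, |Real.log (jac f q x)| ≤ K := by
  obtain ⟨K, hK⟩ := exists_distortion f hbv
  refine ⟨2 * K, fun p q hg x => ?_⟩
  obtain ⟨a, b, hab4, hab6⟩ := exists_shift hg
  have hd := hK p q hg a b hab6
  have hq : (0 : ℝ) < q := by exact_mod_cast hg.pos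
  have hpq := abs_lt.1 (by simpa [abs_mul] using hg.approx : |(q * f.rot - p) * q| < 1)
  -- Moving the base point by `f ^ q` is a displacement by less than `1 / q`.
  have hreturn : ∀ (z : ℝ) (j : ℕ), j ≤ q →
      |Real.log (jac f j (f.F^[q] z)) - Real.log (jac f j z)| ≤ K := by
    intro z j hj
    rw [← jac_sub_int f j _ p]
    rcases le_total z (f.F^[q] z - p) with h | h
    · refine hd z _ j h ?_ hj
      have h2 : f.F^[q] z < f.F^[a] z - (b - p : ℤ) := by
        apply iter_lt_iter
        push_cast
        apply pos_of_mul_pos_right _ hq.le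
        linarith
      push_cast at h2
      linarith
    · rw [abs_sub_comm]
      refine hd _ z j h ?_ hj
      have h2 : f.F^[0] z < f.F^[a + q] z - (b + p : ℤ) := by
        apply iter_lt_iter
        push_cast
        apply pos_of_mul_pos_right _ hq.le
        linarith
      rw [Function.iterate_add_apply] at h2
      push_cast at h2
      rw [iter_sub_int]
      simp only [Function.iterate_zero, id_eq] at h2
      linarith
  obtain ⟨y₀, -, hy₀⟩ := exists_jac_mul f q zero_lt_one
  have hy₀' : jac f q y₀ = 1 := by
    have := iterate_map_add_one f.map_add_one q 0
    rw [zero_add] at this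
    rw [this] at hy₀; linarith
  -- The integer-valued function `⌊t - y₀⌋` detects which interval contains a translate of `y₀`.
  obtain ⟨k, m, hkm, hsum⟩ := exists_steps f hg 2
  have hs := hsum x (fun t => (⌊t - y₀⌋ : ℝ)) 1 fun y => by
    rw [show y + 1 - y₀ = y - y₀ + 1 by ring, Int.floor_add_one]; push_cast; ring
  obtain ⟨j, -, hj⟩ : ∃ j ∈ Finset.univ, (0 : ℝ) <
      (⌊f.F^[k j] x - m j - y₀⌋ : ℝ) - (⌊f.F^[(j : Fin q)] x - y₀⌋ : ℝ) := by
    by_contra! hcon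
    have := Finset.sum_nonpos hcon
    rw [hs] at this
    norm_num at this
  have hj' : ⌊f.F^[j] x - y₀⌋ < ⌊f.F^[k j] x - m j - y₀⌋ := by exact_mod_cast sub_pos.1 hj
  set N : ℤ := ⌊f.F^[k j] x - m j - y₀⌋ with hN
  have hN1 : y₀ + N ≤ f.F^[k j] x - m j := by
    have := Int.floor_le (f.F^[k j] x - m j - y₀)
    linarith
  have hN2 : f.F^[j] x < y₀ + N := by
    have := Int.floor_lt.1 hj'
    linarith
  have hN3 : f.F^[k j] x - m j < f.F^[j] (f.F^[a] x - b) := by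
    rw [iter_sub_int, ← Function.iterate_add_apply]
    have h2 : f.F^[k j] x < f.F^[j + a] x - (b - m j : ℤ) := by
      apply iter_lt_iter
      have := (hkm j).2
      push_cast at this ⊢
      apply pos_of_mul_pos_right _ hq.le
      linarith
    push_cast at h2
    linarith
  obtain ⟨z, hz, hzy⟩ : y₀ + N ∈ f.F^[j] '' Icc x (f.F^[a] x - b) := by
    apply intermediate_value_Icc _ (continuous_iter f j).continuousOn
    · exact ⟨hN2.le, hN1.trans hN3.le⟩
    · have := (strictMono_iter f j).lt_iff_lt.1 (hN2.trans_le (hN1.trans hN3.le))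
      exact this.le
  have e1 : jac f q (f.F^[j] z) = 1 := by
    rw [hzy, ← hy₀']
    simpa using jac_sub_int f q (y₀ + N) N |>.symm
  have e2 : jac f j z * jac f q (f.F^[j] z) = jac f q z * jac f j (f.F^[q] z) := by
    rw [← jac_add, ← jac_add, Nat.add_comm]
  rw [e1, mul_one] at e2
  have e3 : Real.log (jac f j z) = Real.log (jac f q z) + Real.log (jac f j (f.F^[q] z)) := by
    rw [e2, Real.log_mul (jac_pos f _ _).ne' (jac_pos f _ _).ne']
  have b1 := abs_le.1 (hreturn z j j.2.le)
  have b2 := abs_le.1 (hd x z q hz.1 hz.2 le_rfl)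
  rw [abs_le]
  constructor <;> linarith [b1.1, b1.2, b2.1, b2.2]

/-- Denjoy's theorem in quantitative form: combinatorially short intervals are short. Such an
interval has many pairwise disjoint images of comparable length. -/
lemma exists_small (hbv : BoundedVariationOn (deriv f.F) (Icc 0 1)) (hirr : Irrational f.rot)
    {ε : ℝ} (hε : 0 < ε) :
    ∃ Q : ℕ, ∀ q : ℕ, Q < q → ∀ (n n' : ℕ) (m : ℤ), q * (((n' : ℝ) - n) * f.rot - m) < 3 →
      ∀ x, f.F^[n'] x - m - f.F^[n] x < ε := by
  obtain ⟨K, hK⟩ := exists_jac_bound f hbv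
  -- a sequence of good denominators
  choose P D hD hgood using exists_good hirr
  obtain ⟨M, hM⟩ := exists_nat_gt (5 / (Real.exp (-K) * ε))
  let t : ℕ → ℕ := fun i => D^[i] 0
  have ht_succ : ∀ i, t (i + 1) = D (t i) := fun i => Function.iterate_succ_apply' _ _ _
  have ht : StrictMono t := strictMono_nat_of_lt_succ fun i => by rw [ht_succ]; exact hD _
  let d : ℕ → ℕ := fun i => t (i + 1)
  let r : ℕ → ℤ := fun i => P (t i)
  have hd : StrictMono d := fun i j hij => ht (Nat.succ_lt_succ hij)
  have hgd : ∀ i, Good f.rot (r i) (d i) := fun i => by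
    simp only [r, d, ht_succ]; exact hgood _
  let δ : ℕ → ℕ → ℝ := fun i j => ((d i : ℝ) - d j) * f.rot - (r i - r j)
  have hδ : ∀ i j, i ≠ j → δ i j ≠ 0 := by
    intro i j hij h0
    have hne : ((d i : ℤ) - d j) ≠ 0 := by
      have := hd.injective.ne hij
      omega
    apply (hirr.intCast_mul hne).ne_int (r i - r j)
    push_cast
    simp only [δ] at h0
    linarith
  have hev : ∀ ij ∈ (Finset.range M ×ˢ Finset.range M).filter (fun ij => ij.1 ≠ ij.2),
      ∀ᶠ q : ℕ in atTop, 3 < q * |δ ij.1 ij.2| := by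
    intro ij hij
    have := abs_pos.2 (hδ _ _ (Finset.mem_filter.1 hij).2)
    exact (tendsto_natCast_atTop_atTop.atTop_mul_const this).eventually_gt_atTop 3
  obtain ⟨Q, hQ⟩ := eventually_atTop.1 (((Finset.eventually_all _).2 hev).and
    (eventually_ge_atTop 1))
  refine ⟨Q, fun q hq n n' m hlt x => ?_⟩
  obtain ⟨hQ1, hq1⟩ := hQ q hq.le
  have hq0 : (1 : ℝ) ≤ q := by exact_mod_cast hq1
  by_contra! hlen
  set y := f.F^[n] x with hy
  set y' := f.F^[n'] x - m with hy'
  have hyy : y < y' := by linarith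
  let A : ℕ → ℝ := fun i => f.F^[d i] y - r i
  let B : ℕ → ℝ := fun i => f.F^[d i] y' - r i
  have hA : ∀ i, A i = f.F^[d i + n] x - r i := fun i => by
    simp only [A, hy, Function.iterate_add_apply]
  have hB : ∀ i, B i = f.F^[d i + n'] x - m - r i := fun i => by
    simp only [B, hy', Function.iterate_add_apply, iter_sub_int]
  have hone : ∀ i, |d i * f.rot - r i| < 1 := by
    intro i
    have h1 : (1 : ℝ) ≤ d i := by exact_mod_cast (hgd i).pos
    have h2 := (hgd i).approx
    nlinarith [abs_nonneg (d i * f.rot - r i)]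
  have hAlow : ∀ i, y - 1 ≤ A i := by
    intro i
    have : f.F^[n] x < f.F^[d i + n] x - (r i - 1 : ℤ) := by
      apply iter_lt_iter
      push_cast
      linarith [(abs_lt.1 (hone i)).1]
    push_cast at this
    rw [hA]; linarith
  have hBup : ∀ i, B i ≤ y + 4 := by
    intro i
    have h3 : ((n' : ℝ) - n) * f.rot - m < 3 := by
      by_contra! h
      nlinarith
    have : f.F^[d i + n'] x < f.F^[n] x - (-m - r i - 4 : ℤ) := by
      apply iter_lt_iter
      push_cast
      linarith [(abs_lt.1 (hone i)).2]
    push_cast at this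
    rw [hB]; linarith
  have hsep : ∀ i ∈ Finset.range M, ∀ j ∈ Finset.range M, i ≠ j → 0 < δ i j → B j ≤ A i := by
    intro i hi j hj hij hpos
    have h1 := hQ1 (i, j) (by simp [Finset.mem_range.1 hi, Finset.mem_range.1 hj, hij])
    simp only [abs_of_pos hpos] at h1
    have : f.F^[d j + n'] x < f.F^[d i + n] x - (r i - r j - m : ℤ) := by
      apply iter_lt_iter
      push_cast
      apply pos_of_mul_pos_right (a := (q : ℝ)) _ (by linarith)
      simp only [δ] at h1
      linarith
    push_cast at this
    rw [hA, hB]; linarith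
  have hdisj : (↑(Finset.range M) : Set ℕ).PairwiseDisjoint fun i => Ioo (A i) (B i) := by
    intro i hi j hj hij
    rw [Function.onFun, Set.disjoint_left]
    rintro w ⟨w1, w2⟩ ⟨w3, w4⟩
    rcases (hδ i j hij).lt_or_gt with h | h
    · have := hsep j hj i hi hij.symm (by simp only [δ] at h ⊢; linarith)
      linarith
    · have := hsep i hi j hj hij h
      linarith
  have hlenB : ∀ i, Real.exp (-K) * ε ≤ B i - A i := by
    intro i
    obtain ⟨z, -, hz⟩ := exists_jac_mul f (d i) hyy
    have h1 : Real.exp (-K) ≤ jac f (d i) z := by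
      rw [← Real.le_log_iff_exp_le (jac_pos f _ _)]
      exact (abs_le.1 (hK _ _ (hgd i) z)).1
    have h2 : B i - A i = jac f (d i) z * (y' - y) := by
      rw [← hz]; simp only [A, B]; ring
    rw [h2]
    exact mul_le_mul h1 hlen hε.le (jac_pos f _ _).le
  have hmeas : ∑ i ∈ Finset.range M, volume (Ioo (A i) (B i)) ≤ volume (Icc (y - 1) (y + 4)) := by
    rw [← measure_biUnion_finset hdisj fun _ _ => measurableSet_Ioo]
    apply measure_mono
    refine iUnion₂_subset fun i _ w hw => ?_
    exact ⟨(hAlow i).trans hw.1.le, hw.2.le.trans (hBup i)⟩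
  simp only [Real.volume_Ioo, Real.volume_Icc] at hmeas
  rw [← ENNReal.ofReal_sum_of_nonneg fun i _ => le_trans (by positivity) (hlenB i),
    ENNReal.ofReal_le_ofReal_iff (by linarith)] at hmeas
  have h5 := Finset.card_nsmul_le_sum (Finset.range M) (fun i => B i - A i) _
    fun i _ => hlenB i
  rw [Finset.card_range, nsmul_eq_mul] at h5
  have h6 : 0 < Real.exp (-K) * ε := by positivity
  rw [div_lt_iff₀ h6] at hM
  linarith

/-! ### Coboundaries -/

/-- `g` is a coboundary of the transfer operator `w ↦ (w ∘ f) · Df` on continuous functions on the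
circle (all functions being viewed as periodic functions on the line). -/
def Cob (g : ℝ → ℝ) : Prop :=
  ∃ w : ℝ → ℝ, Continuous w ∧ Function.Periodic w 1 ∧ ∀ x, g x = w (f.F x) * deriv f.F x - w x

lemma cob_zero : Cob f fun _ => 0 := ⟨fun _ => 0, continuous_const, fun _ => rfl, by simp⟩

variable {f} in
lemma Cob.add {g h : ℝ → ℝ} (hg : Cob f g) (hh : Cob f h) : Cob f fun x => g x + h x := by
  obtain ⟨w, w1, w2, w3⟩ := hg
  obtain ⟨z, z1, z2, z3⟩ := hh
  exact ⟨fun x => w x + z x, w1.add z1, w2.add z2, fun x => by beta_reduce; rw [w3, z3]; ring⟩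

variable {f} in
lemma Cob.const_mul {g : ℝ → ℝ} (hg : Cob f g) (c : ℝ) : Cob f fun x => c * g x := by
  obtain ⟨w, w1, w2, w3⟩ := hg
  exact ⟨fun x => c * w x, continuous_const.mul w1, fun x => by simp only [w2 x],
    fun x => by beta_reduce; rw [w3]; ring⟩

lemma cob_sum (N : ℕ) (g : ℕ → ℝ → ℝ) (hg : ∀ s, Cob f (g s)) :
    Cob f fun x => ∑ s ∈ Finset.range N, g s x := by
  induction N with
  | zero => simpa using cob_zero f
  | succ N ih => simpa only [Finset.sum_range_succ] using ih.add (hg N)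

lemma periodic_comp_iter {h : ℝ → ℝ} (hp : Function.Periodic h 1) (s : ℕ) :
    Function.Periodic (fun x => h (f.F^[s] x)) 1 := fun x => by
  simp only [iterate_map_add_one f.map_add_one, hp _]

lemma cob_iter {h : ℝ → ℝ} (hc : Continuous h) (hp : Function.Periodic h 1) (s : ℕ) :
    Cob f fun x => h (f.F^[s] x) * jac f s x - h x := by
  induction s with
  | zero => simpa [jac_zero] using cob_zero f
  | succ s ih =>
    have h1 : Cob f fun x => h (f.F^[s + 1] x) * jac f (s + 1) x - h (f.F^[s] x) * jac f s x :=
      ⟨fun x => h (f.F^[s] x) * jac f s x, (hc.comp (continuous_iter f s)).mul (continuous_jac f s),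
        (periodic_comp_iter f hp s).mul (jac_add_one f s), fun x => by
          beta_reduce; rw [jac_succ', Function.iterate_succ_apply]; ring⟩
    simpa using h1.add ih

/-- The key averaging device. Up to a coboundary, `φ` is the average of the functions
`R ∘ f ^ (-s)`, `s < N`, where `R x` is the mean of `φ` along `x, …, f ^ (N - 1) x` weighted by the
derivatives; so a bound on `R` is a bound on `φ` modulo coboundaries. -/
lemma exists_le_of_ratio {φ : ℝ → ℝ} (hc : Continuous φ) (hp : Function.Periodic φ 1) {N : ℕ}
    (hN : 0 < N) {B : ℝ}
    (hR : ∀ x, |∑ k ∈ Finset.range N, φ (f.F^[k] x) * jac f k x| ≤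
      B * ∑ k ∈ Finset.range N, jac f k x) :
    ∃ w : ℝ → ℝ, Continuous w ∧ Function.Periodic w 1 ∧
      ∀ x, |φ x + w (f.F x) * deriv f.F x - w x| ≤ B := by
  have hN0 : (0 : ℝ) < N := by exact_mod_cast hN
  let S : ℝ → ℝ := fun x => ∑ k ∈ Finset.range N, jac f k x
  let R : ℝ → ℝ := fun x => (∑ k ∈ Finset.range N, φ (f.F^[k] x) * jac f k x) / S x
  have hS : ∀ x, 0 < S x := fun x =>
    Finset.sum_pos (fun k _ => jac_pos f k x) (Finset.nonempty_range_iff.2 hN.ne')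
  have hSc : Continuous S := continuous_finsetSum _ fun k _ => continuous_jac f k
  have hRc : Continuous R := (continuous_finsetSum _ fun k _ =>
    (hc.comp (continuous_iter f k)).mul (continuous_jac f k)).div hSc fun x => (hS x).ne'
  have hRp : Function.Periodic R 1 := fun x => by
    simp only [R, S, jac_add_one, periodic_comp_iter f hp _ x]
  have hRB : ∀ x, |R x| ≤ B := fun x => by
    simp only [R, abs_div, abs_of_pos (hS x)]
    exact (div_le_iff₀ (hS x)).2 (hR x)
  let h : ℕ → ℝ → ℝ := fun s x => R (f.Finv^[s] x)
  have hhc : ∀ s, Continuous (h s) := fun s => hRc.comp (f.contDiff_inv.continuous.iterate s)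
  have hhp : ∀ s, Function.Periodic (h s) 1 := fun s x => by
    simp only [h, iterate_map_add_one f.inv_map_add_one, hRp _]
  have hh : ∀ s x, h s (f.F^[s] x) = R x := fun s x => by
    simp only [h, f.left_inv.iterate s x]
  have hcob : Cob f fun x => (1 / (N : ℝ)) * ∑ s ∈ Finset.range N,
      ((φ (f.F^[s] x) * jac f s x - φ x) + (-1) * (h s (f.F^[s] x) * jac f s x - h s x)) :=
    (cob_sum f N _ fun s => (cob_iter f hc hp s).add ((cob_iter f (hhc s) (hhp s) s).const_mul _)).const_mul _
  obtain ⟨w, w1, w2, w3⟩ := hcob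
  refine ⟨w, w1, w2, fun x => ?_⟩
  have e1 : ∑ s ∈ Finset.range N, φ (f.F^[s] x) * jac f s x = R x * S x :=
    (div_mul_cancel₀ _ (hS x).ne').symm
  have e2 : φ x + w (f.F x) * deriv f.F x - w x = (1 / (N : ℝ)) * ∑ s ∈ Finset.range N, h s x := by
    rw [add_sub_assoc, ← w3]
    simp only [hh, Finset.sum_add_distrib, Finset.sum_sub_distrib, ← Finset.mul_sum, e1,
      Finset.sum_const, Finset.card_range, nsmul_eq_mul]
    field_simp
    simp only [S]
    ring
  rw [e2, abs_mul, abs_of_pos (by positivity), one_div_mul_eq_div, div_le_iff₀ hN0]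
  calc _ ≤ ∑ s ∈ Finset.range N, |h s x| := Finset.abs_sum_le_sum_abs _ _
    _ ≤ ∑ s ∈ Finset.range N, B := Finset.sum_le_sum fun s _ => hRB _
    _ = B * N := by simp [mul_comm]

lemma exists_delta {φ : ℝ → ℝ} (hc : Continuous φ) (hp : Function.Periodic φ 1) {ε : ℝ}
    (hε : 0 < ε) : ∃ δ > 0, ∀ y z, |y - z| < δ → |φ y - φ z| < ε := by
  have hu := isCompact_Icc.uniformContinuousOn_of_continuous (hc.continuousOn (s := Icc (-1 : ℝ) 2))
  obtain ⟨δ, hδ, h⟩ := Metric.uniformContinuousOn_iff.1 hu ε hε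
  refine ⟨min δ 1, lt_min hδ one_pos, fun y z hyz => ?_⟩
  have h1 := Int.floor_le y
  have h2 := Int.lt_floor_add_one y
  have h3 := abs_lt.1 (hyz.trans_le (min_le_right _ _))
  have e : ∀ t, φ (t - ⌊y⌋) = φ t := fun t => by
    simpa using sub_int_of_add_one (V := 0) (by simpa using hp) t ⌊y⌋
  have := h (y - ⌊y⌋) ⟨by linarith, by linarith⟩ (z - ⌊y⌋) ⟨by linarith, by linarith⟩
    (by rw [Real.dist_eq, sub_sub_sub_cancel_right]; exact hyz.trans_le (min_le_left _ _))
  rwa [Real.dist_eq, e, e] at this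

/-- The weighted means of a function of zero Lebesgue mean (that is, with a periodic primitive)
along suitable long orbit segments are smaller than its supremum norm by a definite factor. -/
lemma exists_contraction (hbv : BoundedVariationOn (deriv f.F) (Icc 0 1))
    (hirr : Irrational f.rot) :
    ∃ θ : ℝ, 0 < θ ∧ θ < 1 ∧ ∀ (φ U : ℝ → ℝ) (B : ℝ), Continuous φ → Function.Periodic φ 1 →
      Function.Periodic U 1 → (∀ x, HasDerivAt U (φ x) x) → 0 < B → (∀ x, |φ x| ≤ B) →
      ∃ N : ℕ, 0 < N ∧ ∀ x, |∑ k ∈ Finset.range N, φ (f.F^[k] x) * jac f k x| ≤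
        (θ * B) * ∑ k ∈ Finset.range N, jac f k x := by
  obtain ⟨K, hK⟩ := exists_distortion f hbv
  set C : ℝ := Real.exp |K| with hC
  have hC1 : 1 ≤ C := Real.one_le_exp (abs_nonneg K)
  have hC2 : 1 ≤ C ^ 2 := one_le_pow₀ hC1
  have hC0 : 0 < C := by linarith
  refine ⟨1 - 1 / (8 * C ^ 2), ?_, ?_, ?_⟩
  · rw [sub_pos, div_lt_one (by positivity)]; linarith
  · have : 0 < 1 / (8 * C ^ 2) := by positivity
    linarith
  intro φ U B hc hp hUp hU hB hφB
  obtain ⟨δ, hδ, hφδ⟩ := exists_delta hc hp (half_pos hB)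
  obtain ⟨Q, hQ⟩ := exists_small f hbv hirr hδ
  obtain ⟨p, q, hqQ, hg⟩ := exists_good hirr Q
  refine ⟨q, hg.pos, fun x => ?_⟩
  have hq : (0 : ℝ) < q := by exact_mod_cast hg.pos
  obtain ⟨a, b, hab4, hab6⟩ := exists_shift hg
  obtain ⟨k, m, hkm, hsum⟩ := exists_steps f hg 2
  obtain ⟨k', m', hkm', hsum'⟩ := exists_steps f hg 8
  set x' := f.F^[a] x - b with hx'
  have hxx' : x < x' := by
    have : f.F^[0] x < f.F^[a] x - b := by
      apply iter_lt_iter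
      apply pos_of_mul_pos_right (a := (q : ℝ)) _ hq.le
      push_cast
      linarith
    simpa using this
  set L := x' - x with hL
  have hL0 : 0 < L := sub_pos.2 hxx'
  let y : Fin q → ℝ := fun j => f.F^[j] x
  let P : Fin q → ℝ := fun j => f.F^[k j] x - m j
  let R : Fin q → ℝ := fun j => f.F^[k' j] x - m' j
  let D : Fin q → ℝ := fun j => jac f j x
  have hyP : ∀ j, y j < P j := fun j => by
    apply iter_lt_iter
    have := (hkm j).1
    push_cast at this
    apply pos_of_mul_pos_right _ hq.le
    linarith
  have hPx' : ∀ j : Fin q, P j ≤ f.F^[j] x' := fun j => by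
    have : f.F^[k j] x < f.F^[j + a] x - (b - m j : ℤ) := by
      apply iter_lt_iter
      have := (hkm j).2
      push_cast at this ⊢
      apply pos_of_mul_pos_right _ hq.le
      linarith
    rw [hx', iter_sub_int, ← Function.iterate_add_apply]
    push_cast at this
    simp only [P]
    linarith
  have hx'R : ∀ j : Fin q, f.F^[j] x' ≤ R j := fun j => by
    have : f.F^[j + a] x < f.F^[k' j] x - (m' j - b : ℤ) := by
      apply iter_lt_iter
      have := (hkm' j).1
      push_cast at this ⊢
      apply pos_of_mul_pos_right _ hq.le
      linarith
    rw [hx', iter_sub_int, ← Function.iterate_add_apply]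
    push_cast at this
    simp only [R]
    linarith
  have hdist : ∀ (j : Fin q) (z : ℝ), x ≤ z → z ≤ x' →
      jac f j z ≤ C * D j ∧ D j ≤ C * jac f j z := by
    intro j z h1 h2
    have := abs_le.1 ((hK p q hg a b hab6 x z j h1 h2 j.2.le).trans (le_abs_self K))
    have p1 := jac_pos f j z
    have p2 := jac_pos f j x
    constructor
    · rw [← Real.log_le_log_iff p1 (by positivity), Real.log_mul hC0.ne' p2.ne', hC, Real.log_exp]
      linarith [this.2]
    · rw [← Real.log_le_log_iff p2 (by positivity), Real.log_mul hC0.ne' p1.ne', hC, Real.log_exp]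
      linarith [this.1]
  have hlen : ∀ j, P j - y j ≤ C * L * D j ∧ D j * L ≤ C * (R j - y j) := by
    intro j
    obtain ⟨z, hz, hzj⟩ := exists_jac_mul f j hxx'
    obtain ⟨d1, d2⟩ := hdist j z hz.1.le hz.2.le
    have h1 := hPx' j
    have h2 := hx'R j
    have h3 : f.F^[j] x' - y j = jac f j z * L := hzj
    constructor
    · nlinarith
    · nlinarith
  -- `2 = ∑ |K_j|` and `0 = ∑ ∫_{K_j} φ`, where the `q` intervals `K_j = [y j, P j]` cover the
  -- circle exactly twice.
  have hs1 : ∑ j, (P j - y j) = 2 := by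
    exact (hsum x (fun t => t) 1 fun _ => rfl).trans (by norm_num)
  have hs2 : ∑ j, (R j - y j) = 8 := by
    exact (hsum' x (fun t => t) 1 fun _ => rfl).trans (by norm_num)
  have hs3 : ∑ j, (U (P j) - U (y j)) = 0 := by
    have := hsum x U 0 fun t => by simpa using hUp t
    simpa using this
  have hmv : ∀ j, |φ (y j) * (P j - y j) - (U (P j) - U (y j))| ≤ B / 2 * (P j - y j) := by
    intro j
    obtain ⟨z, hz, hzj⟩ := exists_hasDerivAt_eq_slope U φ (hyP j)
      (HasDerivAt.continuousOn fun t _ => hU t) fun t _ => hU t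
    have hPy := sub_pos.2 (hyP j)
    have e : U (P j) - U (y j) = φ z * (P j - y j) := by
      rw [hzj, div_mul_cancel₀ _ hPy.ne']
    rw [e, ← sub_mul, abs_mul, abs_of_pos hPy]
    gcongr
    apply (hφδ _ _ _).le
    have hsm : P j - y j < δ := hQ q hqQ j (k j) (m j) (by
      have := (hkm j).2
      push_cast at this
      linarith) x
    rw [abs_lt]
    constructor <;> linarith [hz.1, hz.2]
  have hmain : |∑ j, φ (y j) * (P j - y j)| ≤ B := by
    have e : ∑ j, φ (y j) * (P j - y j) =
        ∑ j, (φ (y j) * (P j - y j) - (U (P j) - U (y j))) := by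
      rw [Finset.sum_sub_distrib, hs3, sub_zero]
    rw [e]
    calc _ ≤ ∑ j, B / 2 * (P j - y j) :=
          (Finset.abs_sum_le_sum_abs _ _).trans (Finset.sum_le_sum fun j _ => hmv j)
      _ = B := by rw [← Finset.mul_sum, hs1]; ring
  have hrest : |∑ j, φ (y j) * (C * L * D j - (P j - y j))| ≤ B * (C * L * ∑ j, D j - 2) := by
    calc _ ≤ ∑ j, B * (C * L * D j - (P j - y j)) := by
          refine (Finset.abs_sum_le_sum_abs _ _).trans (Finset.sum_le_sum fun j _ => ?_)
          have := sub_nonneg.2 (hlen j).1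
          rw [abs_mul, abs_of_nonneg this]
          gcongr
          exact hφB _
      _ = _ := by
        rw [← Finset.mul_sum, Finset.sum_sub_distrib, hs1, ← Finset.mul_sum]
  have hS8 : (∑ j, D j) * L ≤ 8 * C := by
    rw [Finset.sum_mul]
    calc _ ≤ ∑ j, C * (R j - y j) := Finset.sum_le_sum fun j _ => (hlen j).2
      _ = 8 * C := by rw [← Finset.mul_sum, hs2]; ring
  have htot : C * L * |∑ j, φ (y j) * D j| ≤ B * (C * L * ∑ j, D j - 1) := by
    have e : C * L * ∑ j, φ (y j) * D j =
        ∑ j, φ (y j) * (C * L * D j - (P j - y j)) + ∑ j, φ (y j) * (P j - y j) := by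
      rw [← Finset.sum_add_distrib, Finset.mul_sum]
      exact Finset.sum_congr rfl fun j _ => by ring
    rw [← abs_of_pos (mul_pos hC0 hL0), ← abs_mul, abs_of_pos (mul_pos hC0 hL0), e]
    linarith [abs_add_le (∑ j, φ (y j) * (C * L * D j - (P j - y j)))
      (∑ j, φ (y j) * (P j - y j))]
  rw [Finset.sum_range, Finset.sum_range]
  change |∑ j, φ (y j) * D j| ≤ _ * ∑ j, D j
  have hfin : C * L * ∑ j, D j ≤ 8 * C ^ 2 := by nlinarith
  have hfrac : C * L * (∑ j, D j) * (1 / (8 * C ^ 2)) ≤ 1 := by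
    rw [mul_one_div, div_le_one (by positivity)]; exact hfin
  refine le_of_mul_le_mul_left ?_ (mul_pos hC0 hL0)
  calc _ ≤ _ := htot
    _ ≤ B * (C * L * ∑ j, D j - C * L * (∑ j, D j) * (1 / (8 * C ^ 2))) := by gcongr
    _ = _ := by ring

/-- A function of zero Lebesgue mean is a uniform limit of coboundaries. -/
lemma exists_approx (hbv : BoundedVariationOn (deriv f.F) (Icc 0 1)) (hirr : Irrational f.rot)
    {φ U : ℝ → ℝ} (hc : Continuous φ) (hp : Function.Periodic φ 1) (hUp : Function.Periodic U 1)
    (hU : ∀ x, HasDerivAt U (φ x) x) {ε : ℝ} (hε : 0 < ε) :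
    ∃ w : ℝ → ℝ, Continuous w ∧ Function.Periodic w 1 ∧
      ∀ x, |φ x + w (f.F x) * deriv f.F x - w x| ≤ ε := by
  obtain ⟨θ, hθ0, hθ1, hθ⟩ := exists_contraction f hbv hirr
  obtain ⟨B₀, hB₀⟩ := (hp.isBounded_of_continuous one_ne_zero hc).exists_norm_le
  set B := max B₀ 1
  have hB : 0 < B := lt_max_of_lt_right one_pos
  have hφB : ∀ x, |φ x| ≤ B := fun x => (hB₀ _ ⟨x, rfl⟩).trans (le_max_left _ _)
  have key : ∀ n : ℕ, ∃ w : ℝ → ℝ, Continuous w ∧ Function.Periodic w 1 ∧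
      ∀ x, |φ x + w (f.F x) * deriv f.F x - w x| ≤ θ ^ n * B := by
    intro n
    induction n with
    | zero => exact ⟨fun _ => 0, continuous_const, fun _ => rfl, by simpa using hφB⟩
    | succ n ih =>
      obtain ⟨w, w1, w2, w3⟩ := ih
      -- The remainder again has a periodic primitive, namely `U + W ∘ F - W` with `W' = w`.
      let W : ℝ → ℝ := fun x => ∫ t in (0 : ℝ)..x, w t
      have hW : ∀ x, HasDerivAt W (w x) x := fun x => w1.integral_hasStrictDerivAt 0 x |>.hasDerivAt
      have hW1 : ∀ x, W (x + 1) = W x + ∫ t in (0 : ℝ)..1, w t := fun x => by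
        have h1 := w2.intervalIntegral_add_eq x 0
        rw [zero_add] at h1
        rw [← h1]
        exact (intervalIntegral.integral_add_adjacent_intervals (w1.intervalIntegrable _ _)
          (w1.intervalIntegrable _ _)).symm
      let ψ : ℝ → ℝ := fun x => φ x + w (f.F x) * deriv f.F x - w x
      have hψc : Continuous ψ :=
        (hc.add ((w1.comp (continuous_lift f)).mul (continuous_deriv_lift f))).sub w1
      have hψp : Function.Periodic ψ 1 := fun x => by
        simp only [ψ, hp x, w2 x, f.map_add_one, w2 (f.F x),
          periodic_deriv_of_shift f.map_add_one x]
      obtain ⟨N, hN, hNR⟩ := hθ ψ (fun x => U x + W (f.F x) - W x) (θ ^ n * B) hψc hψp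
        (fun x => by simp only [hUp x, f.map_add_one, hW1]; ring)
        (fun x => ((hU x).add ((hW (f.F x)).comp x (hasDerivAt_lift f x))).sub (hW x))
        (by positivity) w3
      obtain ⟨z, z1, z2, z3⟩ := exists_le_of_ratio f hψc hψp hN hNR
      refine ⟨fun x => w x + z x, w1.add z1, w2.add z2, fun x => ?_⟩
      have := z3 x
      simp only [ψ] at this
      rw [pow_succ', mul_assoc]
      convert this using 2
      ring
  have hlim : Tendsto (fun n : ℕ => θ ^ n * B) atTop (𝓝 0) := by
    simpa using (tendsto_pow_atTop_nhds_zero_of_lt_one hθ0.le hθ1).mul_const B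
  obtain ⟨n, hn⟩ := (hlim.eventually_lt_const hε).exists
  obtain ⟨w, w1, w2, w3⟩ := key n
  exact ⟨w, w1, w2, fun x => (w3 x).trans hn.le⟩

/-- The approximation can be corrected to have zero Lebesgue mean, by subtracting a multiple of the
average of `D(f ^ k)`, `k < q`: it has mean `1`, and its coboundary is `(D(f ^ q) - 1) / q`, which
is small by Denjoy's inequality. -/
lemma exists_approx_mean_zero (hbv : BoundedVariationOn (deriv f.F) (Icc 0 1))
    (hirr : Irrational f.rot)
    {φ U : ℝ → ℝ} (hc : Continuous φ) (hp : Function.Periodic φ 1) (hUp : Function.Periodic U 1)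
    (hU : ∀ x, HasDerivAt U (φ x) x) {ε : ℝ} (hε : 0 < ε) :
    ∃ w : ℝ → ℝ, Continuous w ∧ Function.Periodic w 1 ∧ ∫ x in (0 : ℝ)..1, w x = 0 ∧
      ∀ x, |φ x + w (f.F x) * deriv f.F x - w x| ≤ ε := by
  obtain ⟨w, w1, w2, w3⟩ := exists_approx f hbv hirr hc hp hUp hU (half_pos hε)
  obtain ⟨K, hK⟩ := exists_jac_bound f hbv
  set c := ∫ x in (0 : ℝ)..1, w x with hcdef
  obtain ⟨Q, hQ⟩ := exists_nat_gt (|c| * (Real.exp K + 1) / (ε / 2))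
  obtain ⟨p, q, hqQ, hg⟩ := exists_good hirr Q
  have hq : (0 : ℝ) < q := by exact_mod_cast hg.pos
  let v : ℝ → ℝ := fun x => (1 / (q : ℝ)) * ∑ k ∈ Finset.range q, jac f k x
  have hvc : Continuous v :=
    continuous_const.mul (continuous_finsetSum _ fun k _ => continuous_jac f k)
  have hvp : Function.Periodic v 1 := fun x => by simp only [v, jac_add_one]
  have hjac : ∀ k, ∫ x in (0 : ℝ)..1, jac f k x = 1 := fun k => by
    rw [intervalIntegral.integral_eq_sub_of_hasDerivAt (fun x _ => hasDerivAt_iter f k x)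
      ((continuous_jac f k).intervalIntegrable _ _)]
    have := iterate_map_add_one f.map_add_one k 0
    rw [zero_add] at this
    rw [this]; ring
  have hv1 : ∫ x in (0 : ℝ)..1, v x = 1 := by
    simp only [v]
    rw [intervalIntegral.integral_const_mul, intervalIntegral.integral_finsetSum
      fun k _ => (continuous_jac f k).intervalIntegrable _ _]
    simp only [hjac, Finset.sum_const, Finset.card_range, nsmul_eq_mul]
    field_simp
  have hvT : ∀ x, v (f.F x) * deriv f.F x - v x = (jac f q x - 1) / q := fun x => by
    have : (∑ k ∈ Finset.range q, jac f k (f.F x)) * deriv f.F x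
        - ∑ k ∈ Finset.range q, jac f k x = jac f q x - 1 := by
      rw [Finset.sum_mul, ← Finset.sum_sub_distrib, ← jac_zero f x, 
        ← Finset.sum_range_sub (fun k => jac f k x)]
      exact Finset.sum_congr rfl fun k _ => by rw [jac_succ']
    rw [← this]
    simp only [v]
    ring
  refine ⟨fun x => w x - c * v x, w1.sub (continuous_const.mul hvc),
    fun x => by simp only [w2 x, hvp x], ?_, fun x => ?_⟩
  · have hcv : Continuous fun x => c * v x := continuous_const.mul hvc
    rw [intervalIntegral.integral_sub (w1.intervalIntegrable _ _) (hcv.intervalIntegrable _ _),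
      intervalIntegral.integral_const_mul, hv1, ← hcdef]
    ring
  · have e : φ x + (w (f.F x) - c * v (f.F x)) * deriv f.F x - (w x - c * v x) =
        (φ x + w (f.F x) * deriv f.F x - w x) - c * ((jac f q x - 1) / q) := by
      rw [← hvT]; ring
    have hj : |jac f q x - 1| ≤ Real.exp K + 1 := by
      have h1 : jac f q x ≤ Real.exp K :=
        (Real.log_le_iff_le_exp (jac_pos f _ _)).1 (abs_le.1 (hK p q hg x)).2
      have h2 := jac_pos f q x
      rw [abs_le]; constructor <;> linarith [Real.exp_pos K]
    have hQq : (Q : ℝ) < q := by exact_mod_cast hqQ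
    have hsm : |c * ((jac f q x - 1) / q)| ≤ ε / 2 := by
      rw [abs_mul, abs_div, abs_of_pos hq, ← mul_div_assoc, div_le_iff₀ hq]
      have h3 := (div_lt_iff₀ (half_pos hε)).1 (hQ.trans hQq)
      have h4 := mul_le_mul_of_nonneg_left hj (abs_nonneg c)
      linarith
    rw [e]
    linarith [abs_sub (φ x + w (f.F x) * deriv f.F x - w x) (c * ((jac f q x - 1) / q)), w3 x]

end KeyProp

/-- **Proposition.** For a `C^{1+bv}` circle diffeomorphism `f` of irrational rotation number
and a `C¹` function `u` of zero mean with respect to the invariant measure `μ`, there is a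
sequence of continuous functions `w_n` of zero Lebesgue mean with `(w_n ∘ f)·Df - w_n → u'`
uniformly. -/
theorem key_proposition
    (f : C1Diffeo) (hbv : BoundedVariationOn (deriv f.F) (Set.Icc 0 1))
    (hirr : Irrational f.rot)
    (μ : Measure 𝕊) [IsProbabilityMeasure μ] (hinv : MeasurePreserving f.toCircle μ μ)
    (u : 𝕊 → ℝ) (hu : IsC1 u) (hmean : ∫ x, u x ∂μ = 0) :
    ∃ w : ℕ → 𝕊 → ℝ, (∀ n, Continuous (w n)) ∧
      TendstoUniformly (fun n x => w n (f.toCircle x) * f.Df x - w n x) (derivS u) atTop ∧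
      ∀ n, ∫ x, w n x ∂(volume : Measure 𝕊) = 0 := by
  have hd : Continuous (deriv (lft u)) := ContDiff.continuous_deriv hu le_rfl
  have hdiff : Differentiable ℝ (lft u) := ContDiff.differentiable hu one_ne_zero
  -- Applied to `-u'`, whose primitive `-u` is periodic.
  choose w w1 w2 w3 w4 using fun n : ℕ =>
    KeyProp.exists_approx_mean_zero f hbv hirr (φ := fun x => -deriv (lft u) x)
      (U := fun x => -lft u x) hd.neg (fun x => congrArg Neg.neg ((lft_periodic u).deriv' x))
      (fun x => congrArg Neg.neg (lft_periodic u x))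
      (fun x => (hdiff x).hasDerivAt.neg) (ε := 1 / ((n : ℝ) + 1)) Nat.one_div_pos_of_nat
  refine ⟨fun n => (w2 n).lift, fun n => ?_, ?_, fun n => ?_⟩
  · exact continuous_coinduced_dom.2 (w1 n)
  · rw [Metric.tendstoUniformly_iff]
    intro ε hε
    filter_upwards [tendsto_one_div_add_atTop_nhds_zero_nat.eventually_lt_const hε] with n hn x
    induction x using QuotientAddGroup.induction_on with
    | H x =>
      rw [dist_comm, Real.dist_eq]
      have e : (w2 n).lift (f.toCircle (x : 𝕊)) * f.Df (x : 𝕊) - (w2 n).lift (x : 𝕊)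
          - derivS u (x : 𝕊) = -deriv (lft u) x + w n (f.F x) * deriv f.F x - w n x := by
        change w n (f.F x) * deriv f.F x - w n x - deriv (lft u) x = _
        ring
      exact (congrArg abs e).trans_lt ((w4 n x).trans_lt hn)
  · rw [← UnitAddCircle.intervalIntegral_preimage 0, zero_add]
    exact w3 n
end
end

section
/- Let f be an orientation-preserving C^1 circle diffeomorphism whose derivative has bounded variation and whose rotation number is irrational, and let λ be the normalized Lebesgue measure on the circle. Then there exists a sequence of continuous real-valued functions ŵ_k on the circle such that (ŵ_k ∘ f)·Df − ŵ_k converges uniformly to the function Df − 1 and ∫ ŵ_k dλ = 0 for every k. Explicitly, one may take ŵ_k := 1 − (1/q_k)[1 + Df + D(f²) + ... + D(f^{q_k−1})], where (q_k) is the sequence of denominators of the continued fraction convergents of the rotation number of f. -/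
/-!
Telescoping with the cocycle relation `D(f^(j+1)) = (D(f^j) ∘ f) · Df` gives
`Df - 1 - ((w k ∘ f) · Df - w k) = (D(f^(q k)) - 1) / q k`, and `q k → ∞`, so uniform convergence
follows once `D(f^(q k))` is bounded uniformly in `k` (`C1Diffeo.exists_deriv_iterate_bound`,
a form of Denjoy's inequality). Each `D(f^j)` has integral one, whence the zero mean.

The bound compares `log D(f^q)`, a Birkhoff sum of `log Df` of length `q = q k`, at an arbitrary
point with its value `0` at a point where `D(f^q)` equals its mean value `1`. Two such sums differ
by at most a fixed multiple of the variation of `log Df` over the circle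
(`abs_birkhoff_sub_le`): since `|α - p / q| ≤ 1 / q ^ 2` with `p` prime to `q`, a monotone
semiconjugacy `H` to the rotation by `α` shows that an orbit segment of length `q` can be numbered
in the cyclic order so that its `n`-th point is sent by `H` within `1 / q` of `H x + n / q`. Hence
the points of two orbit segments interlace up to a bounded shift. Only the monotonicity of `H` is
used, not its continuity. The variation of a periodic function is handled through a monotone
function `W` that majorizes all its increments (`exists_variation_majorant`), which makes the
resulting sums telescope.
-/

open MeasureTheory Function Filter Set
open scoped Topology

noncomputable section

/-! ### Continued fraction denominators -/

/-- The numerators of the convergents are integers. -/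
lemma exists_int_contsAux_a (v : ℝ) (n : ℕ) :
    (∃ z : ℤ, ((GenContFract.of v).contsAux n).a = z) ∧
      ∃ z : ℤ, ((GenContFract.of v).contsAux (n + 1)).a = z := by
  induction n with
  | zero =>
    refine ⟨⟨1, by simp [GenContFract.contsAux]⟩, ⟨⌊v⌋, ?_⟩⟩
    simp [GenContFract.contsAux, GenContFract.of_h_eq_floor]
  | succ n ih =>
    refine ⟨ih.2, ?_⟩
    obtain ⟨⟨z₀, h₀⟩, ⟨z₁, h₁⟩⟩ := ih
    rcases hs : (GenContFract.of v).s.get? n with _ | gp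
    · refine ⟨z₁, ?_⟩
      rw [← h₁]
      simp [GenContFract.contsAux, hs]
    · obtain ⟨ha, z, hz⟩ := GenContFract.of_partNum_eq_one_and_exists_int_partDen_eq hs
      refine ⟨z * z₁ + z₀, ?_⟩
      rw [GenContFract.contsAux_recurrence hs rfl rfl]
      simp only [ha, hz, h₀, h₁]
      push_cast
      ring

lemma not_terminatedAt_of_irrational {α : ℝ} (h : Irrational α) (k : ℕ) :
    ¬ (GenContFract.of α).TerminatedAt k := fun hk => by
  obtain ⟨r, hr⟩ := (GenContFract.terminates_iff_rat α).1 ⟨k, hk⟩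
  exact h ⟨r, hr.symm⟩

/-- The convergent with denominator `q k` is a reduced fraction `p / q k` at distance at most
`1 / (q k) ^ 2` from `α`. -/
lemma exists_num_of_dens {α : ℝ} (h : Irrational α) {q : ℕ → ℕ}
    (hq : ∀ k, (q k : ℝ) = (GenContFract.of α).dens k) (k : ℕ) :
    0 < q k ∧ ∃ p : ℤ, IsCoprime p (q k : ℤ) ∧ |(q k : ℝ) * α - p| ≤ 1 / q k := by
  have hfib := GenContFract.succ_nth_fib_le_of_nth_den (v := α) (n := k)
    (Or.inr (not_terminatedAt_of_irrational h _))
  rw [← hq] at hfib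
  have hpos : 0 < q k := by
    have : Nat.fib (k + 1) ≤ q k := by exact_mod_cast hfib
    exact (Nat.fib_pos.2 k.succ_pos).trans_le this
  obtain ⟨p, hp⟩ := (exists_int_contsAux_a α k).2
  obtain ⟨p', hp'⟩ := (exists_int_contsAux_a α (k + 1)).2
  have hp : (GenContFract.of α).nums k = p := hp
  have hp' : (GenContFract.of α).nums (k + 1) = p' := hp'
  refine ⟨hpos, p, ?_, ?_⟩
  · have hdet := SimpContFract.determinant (s := SimpContFract.of α) (n := k)
      (not_terminatedAt_of_irrational h _)
    change (GenContFract.of α).nums k * (GenContFract.of α).dens (k + 1) -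
      (GenContFract.of α).dens k * (GenContFract.of α).nums (k + 1) = _ at hdet
    rw [hp, hp', ← hq, ← hq] at hdet
    have hdet' : p * (q (k + 1) : ℤ) - q k * p' = (-1) ^ (k + 1) := by exact_mod_cast hdet
    refine ⟨(-1) ^ (k + 1) * q (k + 1), -((-1) ^ (k + 1) * p'), ?_⟩
    have hsq : ((-1 : ℤ) ^ (k + 1)) * (-1) ^ (k + 1) = 1 := by
      rw [← mul_pow]; simp
    linear_combination (-1 : ℤ) ^ (k + 1) * hdet' + hsq
  · have happ := GenContFract.abs_sub_convs_le (not_terminatedAt_of_irrational h k)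
    have hmono := GenContFract.of_den_mono (v := α) (n := k)
    rw [GenContFract.conv_eq_num_div_den, hp] at happ
    rw [← hq] at happ hmono
    rw [← hq] at happ hmono
    have hq0 : (0 : ℝ) < q k := by exact_mod_cast hpos
    have hle : |α - p / q k| ≤ 1 / (q k * q k : ℝ) :=
      happ.trans (by gcongr)
    have : (q k : ℝ) * α - p = q k * (α - p / q k) := by field_simp
    rw [this, abs_mul, abs_of_pos hq0]
    calc (q k : ℝ) * |α - p / q k| ≤ q k * (1 / (q k * q k)) := by gcongr
      _ = 1 / q k := by field_simp

lemma tendsto_dens {α : ℝ} (h : Irrational α) {q : ℕ → ℕ}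
    (hq : ∀ k, (q k : ℝ) = (GenContFract.of α).dens k) :
    Tendsto (fun k => (q k : ℝ)) atTop atTop := by
  have hle : ∀ k : ℕ, (k : ℝ) ≤ q k := fun k => by
    have hfib := GenContFract.succ_nth_fib_le_of_nth_den (v := α) (n := k)
      (Or.inr (not_terminatedAt_of_irrational h _))
    rw [← hq] at hfib
    have : Nat.fib (k + 1) ≤ q k := by exact_mod_cast hfib
    have := Nat.le_fib_add_one (k + 1)
    exact_mod_cast (by omega : k ≤ q k)
  exact tendsto_atTop_mono hle tendsto_natCast_atTop_atTop

/-! ### A monotone majorant of the variation -/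

/-- The function `W t = ⌊t⌋ V + Var(g, [0, fract t])`, with `V` the variation of `g` over a
period, dominates all increments of `g` and is a monotone quasi-periodic function. -/
lemma exists_variation_majorant {g : ℝ → ℝ} (hper : Function.Periodic g 1)
    (hbv : BoundedVariationOn g (Set.Icc 0 1)) :
    ∃ (W : ℝ → ℝ) (V : ℝ), (∀ t, W (t + 1) = W t + V) ∧
      ∀ a b, a ≤ b → |g b - g a| ≤ W b - W a := by
  set A : ℝ → ℝ := fun t => (eVariationOn g (Set.Icc 0 t)).toReal with hA
  have key : ∀ a b, 0 ≤ a → a ≤ b → b ≤ 1 → |g b - g a| ≤ A b - A a := by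
    intro a b ha hab hb
    have hbva : BoundedVariationOn g (Set.Icc 0 a) :=
      hbv.mono (Set.Icc_subset_Icc le_rfl (hab.trans hb))
    have hbvab : BoundedVariationOn g (Set.Icc a b) := hbv.mono (Set.Icc_subset_Icc ha hb)
    have hadd := eVariationOn.Icc_add_Icc g (s := Set.univ) ha hab (Set.mem_univ a)
    simp only [Set.univ_inter] at hadd
    have : A b = A a + (eVariationOn g (Set.Icc a b)).toReal := by
      simp only [hA]
      rw [← hadd, ENNReal.toReal_add hbva hbvab]
    have hd := hbvab.dist_le (Set.right_mem_Icc.2 hab) (Set.left_mem_Icc.2 hab)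
    rw [Real.dist_eq] at hd
    linarith
  have hmod : ∀ t, g (Int.fract t) = g t := fun t => by
    have := hper.sub_zsmul_eq (x := t) ⌊t⌋
    rwa [zsmul_eq_mul, mul_one, Int.self_sub_floor] at this
  have h10 : g 1 = g 0 := by simpa using hper 0
  refine ⟨fun t => ⌊t⌋ * A 1 + A (Int.fract t), A 1, fun t => ?_, fun a b hab => ?_⟩
  · simp only [Int.floor_add_one, Int.fract_add_one]
    push_cast
    ring
  · rw [← hmod a, ← hmod b]
    have ha0 := Int.fract_nonneg a
    have hb0 := Int.fract_nonneg b
    have ha1 := (Int.fract_lt_one a).le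
    have hb1 := (Int.fract_lt_one b).le
    rcases (Int.floor_le_floor hab).eq_or_lt with heq | hlt
    · have : Int.fract a ≤ Int.fract b := by
        rw [Int.fract, Int.fract, heq]; linarith
      have := key _ _ ha0 this hb1
      simp only [heq]
      linarith
    · have h1 := key _ _ ha0 ha1 le_rfl
      have h2 := key _ _ le_rfl hb0 hb1
      have h3 := key _ _ le_rfl zero_le_one le_rfl
      have hA0 : A 0 = 0 := by simp [hA, eVariationOn.subsingleton]
      have h4 : |g (Int.fract b) - g (Int.fract a)| ≤
          |g (Int.fract b) - g 0| + |g 1 - g (Int.fract a)| := by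
        rw [h10]; exact abs_sub_le _ _ _
      have h5 : (1 : ℝ) ≤ ⌊b⌋ - ⌊a⌋ := by
        have : (⌊a⌋ : ℝ) + 1 ≤ ⌊b⌋ := by exact_mod_cast hlt
        linarith
      have h6 : 0 ≤ A 1 := ENNReal.toReal_nonneg
      nlinarith [mul_nonneg (sub_nonneg.2 h5) h6]

/-! ### The Denjoy inequality -/

/-- The point of the circle orbit of `x` numbered `n` in the cyclic order: `b` is an inverse of
`p` modulo `q`, so `i = n * b mod q` is the time at which the rotation by `p / q` visits `n / q`,
and the lift is translated by the corresponding integer. -/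
def orbitPt (F : ℝ → ℝ) (p : ℤ) (q : ℕ) (b : ℤ) (x : ℝ) (n : ℤ) : ℝ :=
  F^[(n * b % q).toNat] x - (((n * b % q) * p - n) / q : ℤ)

section
variable {F : ℝ → ℝ} {p b : ℤ} {q : ℕ}

lemma orbitPt_add (hq : 0 < q) (x : ℝ) (n : ℤ) :
    orbitPt F p q b x (n + q) = orbitPt F p q b x n + 1 := by
  have hq' : (q : ℤ) ≠ 0 := by positivity
  have h1 : (n + q) * b % (q : ℤ) = n * b % q := by
    rw [add_mul, Int.add_mul_emod_self_left]
  have h2 : ((n * b % q) * p - (n + q)) / (q : ℤ) = ((n * b % q) * p - n) / q - 1 := by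
    rw [← sub_sub, Int.sub_ediv_of_dvd _ (dvd_refl _), Int.ediv_self hq']
  rw [orbitPt, orbitPt, h1, h2]
  push_cast
  ring

/-- A semiconjugacy to the rotation by `α` places the point numbered `n` within `1 / q` of
`H x + n / q`. -/
lemma abs_map_orbitPt_sub_lt {α : ℝ} (hq : 0 < q) (hb : (q : ℤ) ∣ b * p - 1)
    (hα : |(q : ℝ) * α - p| ≤ 1 / q) (H : CircleDeg1Lift)
    (hH : ∀ x, H (F x) = α + H x) (x : ℝ) (n : ℤ) :
    |H (orbitPt F p q b x n) - (H x + n / q)| < 1 / q := by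
  have hq0 : (0 : ℝ) < q := by exact_mod_cast hq
  have hqz : (0 : ℤ) < q := by exact_mod_cast hq
  have hiter : ∀ i : ℕ, H (F^[i] x) = H x + i * α := fun i => by
    induction i with
    | zero => simp
    | succ i ih => rw [Function.iterate_succ_apply', hH, ih]; push_cast; ring
  set i := n * b % q with hi
  have hi0 : 0 ≤ i := Int.emod_nonneg _ hqz.ne'
  have hiq : i < q := Int.emod_lt_of_pos _ hqz
  have hdvd : (q : ℤ) ∣ i * p - n := by
    have h1 : (q : ℤ) ∣ n * b - i := Int.dvd_self_sub_emod
    have : i * p - n = n * (b * p - 1) - (n * b - i) * p := by ring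
    rw [this]
    exact dvd_sub (hb.mul_left _) (h1.mul_right _)
  obtain ⟨m, hm⟩ := hdvd
  have hpt : orbitPt F p q b x n = F^[i.toNat] x - (m : ℤ) := by
    rw [orbitPt, ← hi, hm, Int.mul_ediv_cancel_left _ hqz.ne']
  have hcast : ((i.toNat : ℕ) : ℝ) = (i : ℝ) := by
    exact_mod_cast congrArg (Int.cast : ℤ → ℝ) (Int.toNat_of_nonneg hi0)
  have hmR : (i : ℝ) * p - n = q * m := by exact_mod_cast hm
  rw [hpt, H.map_sub_int, hiter, hcast]
  have : H x + i * α - m - (H x + n / q) = i / q * (q * α - p) := by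
    field_simp
    linear_combination hmR
  rw [this, abs_mul, abs_of_nonneg (by positivity)]
  have hlt : (i : ℝ) / q < 1 := by
    rw [div_lt_one hq0]; exact_mod_cast hiq
  have h0 : (0 : ℝ) ≤ i / q := by positivity
  calc (i : ℝ) / q * |q * α - p| ≤ i / q * (1 / q) := by gcongr
    _ < 1 * (1 / q) := by gcongr
    _ = 1 / q := one_mul _

/-- Any `q` consecutively numbered points carry the same Birkhoff sum as the orbit segment
of length `q`, since multiplication by `b` permutes the residues modulo `q`. -/
lemma sum_orbitPt {φ : ℝ → ℝ} (hφ : Function.Periodic φ 1) (hq : 0 < q)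
    (hb : (q : ℤ) ∣ b * p - 1) (x : ℝ) (s : ℤ) :
    ∑ r ∈ Finset.range q, φ (orbitPt F p q b x (r + s)) =
      ∑ i ∈ Finset.range q, φ (F^[i] x) := by
  have hqz : (0 : ℤ) < q := by exact_mod_cast hq
  have hval : ∀ n : ℤ, φ (orbitPt F p q b x n) = φ (F^[(n * b % q).toNat] x) := fun n => by
    have := hφ.sub_zsmul_eq (x := F^[(n * b % q).toNat] x) (((n * b % q) * p - n) / q)
    rw [orbitPt]
    simpa using this
  simp only [hval]
  set e : ℕ → ℕ := fun r => (((r : ℤ) + s) * b % q).toNat with he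
  have hmaps : ∀ r ∈ Finset.range q, e r ∈ Finset.range q := fun r _ => by
    have h0 : 0 ≤ ((r : ℤ) + s) * b % q := Int.emod_nonneg _ hqz.ne'
    have h1 := Int.emod_lt_of_pos (((r : ℤ) + s) * b) hqz
    simp only [he, Finset.mem_range]
    omega
  have hinj : Set.InjOn e (Finset.range q : Set ℕ) := by
    intro r hr r' hr' h
    have h0 : 0 ≤ ((r : ℤ) + s) * b % q := Int.emod_nonneg _ hqz.ne'
    have h0' : 0 ≤ ((r' : ℤ) + s) * b % q := Int.emod_nonneg _ hqz.ne'
    have h1 : ((r : ℤ) + s) * b % q = ((r' : ℤ) + s) * b % q := by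
      simp only [he] at h; omega
    have h2 : (q : ℤ) ∣ ((r : ℤ) + s) * b - ((r' : ℤ) + s) * b :=
      Int.emod_eq_emod_iff_emod_sub_eq_zero.1 h1 |> Int.dvd_of_emod_eq_zero
    have h3 : (q : ℤ) ∣ (r : ℤ) - r' := by
      have : (r : ℤ) - r' = (((r : ℤ) + s) * b - ((r' : ℤ) + s) * b) * p
          - (r - r') * (b * p - 1) := by ring
      rw [this]
      exact dvd_sub (h2.mul_right _) (hb.mul_left _)
    have hr1 : r < q := by simpa using hr
    have hr1' : r' < q := by simpa using hr'
    have := Int.eq_zero_of_abs_lt_dvd h3 (by rw [abs_lt]; omega)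
    omega
  have himg : (Finset.range q).image e = Finset.range q := by
    apply Finset.eq_of_subset_of_card_le
    · exact Finset.image_subset_iff.2 hmaps
    · rw [Finset.card_image_of_injOn hinj]
  conv_rhs => rw [← himg, Finset.sum_image hinj]

/-- Telescoping for a sequence that increases by `V` over each block of `q` terms. -/
lemma sum_shift_sub {u : ℤ → ℝ} {V : ℝ} (hu : ∀ n, u (n + q) = u n + V) (s : ℤ) (L : ℕ) :
    ∑ r ∈ Finset.range q, (u (r + s + L) - u (r + s)) = L * V := by
  induction L with
  | zero => simp
  | succ L ih =>
    have htel := Finset.sum_range_sub (fun r : ℕ => u (r + s + L)) q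
    have hend : u ((q : ℤ) + s + L) = u (s + L) + V := by
      rw [← hu]; congr 1; ring
    simp only [hend, Nat.cast_zero, zero_add, add_sub_cancel_left] at htel
    push_cast
    have : ∀ r : ℕ, u (r + s + (L + 1)) - u (r + s) =
        (u ((r + 1 : ℕ) + s + L) - u (r + s + L)) + (u (r + s + L) - u (r + s)) := fun r => by
      have : ((r + 1 : ℕ) : ℤ) + s + L = r + s + (L + 1) := by push_cast; ring
      rw [this]; ring
    simp only [this, Finset.sum_add_distrib, ih, htel]
    ring

/-- Denjoy–Koksma type inequality: two Birkhoff sums of length `q` of a function dominated by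
`W` differ by at most five times the increase of `W` over a period. The orbits of `x` and `y` are
matched in cyclic order. -/
lemma abs_birkhoff_sub_le {α : ℝ} (hq : 0 < q) (hb : (q : ℤ) ∣ b * p - 1)
    (hα : |(q : ℝ) * α - p| ≤ 1 / q) (H : CircleDeg1Lift)
    (hH : ∀ x, H (F x) = α + H x) {φ W : ℝ → ℝ} {V : ℝ} (hφ : Function.Periodic φ 1)
    (hW : ∀ t, W (t + 1) = W t + V) (hφW : ∀ a b, a ≤ b → |φ b - φ a| ≤ W b - W a)
    (x y : ℝ) :
    |∑ i ∈ Finset.range q, φ (F^[i] y) - ∑ i ∈ Finset.range q, φ (F^[i] x)| ≤ 5 * V := by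
  have hq0 : (0 : ℝ) < q := by exact_mod_cast hq
  have hWmono : Monotone W := fun a c hac => by
    have := (abs_nonneg _).trans (hφW a c hac)
    linarith
  set s : ℤ := ⌊(H y - H x) * q⌋ with hs
  have hs1 : H x + s / q ≤ H y := by
    have := Int.floor_le ((H y - H x) * q)
    have : (s : ℝ) / q ≤ H y - H x := by rwa [div_le_iff₀ hq0]
    linarith
  have hs2 : H y < H x + (s + 1) / q := by
    have := Int.lt_floor_add_one ((H y - H x) * q)
    have : H y - H x < (s + 1 : ℝ) / q := by rwa [lt_div_iff₀ hq0]
    linarith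
  set X := orbitPt F p q b x with hX
  set Y := orbitPt F p q b y with hY
  -- the images under `H` are strictly ordered, hence so are the points themselves
  have hXY : ∀ r : ℕ, X (r + (s - 2)) ≤ Y r := fun r => by
    refine (H.monotone.reflect_lt ?_).le
    have h1 := (abs_lt.1 (abs_map_orbitPt_sub_lt hq hb hα H hH x (r + (s - 2)))).2
    have h2 := (abs_lt.1 (abs_map_orbitPt_sub_lt hq hb hα H hH y r)).1
    have e : ((r + (s - 2) : ℤ) : ℝ) / q = r / q + s / q - 2 * (1 / q) := by
      push_cast; ring
    rw [e] at h1
    push_cast at h2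
    linarith
  have hYX : ∀ r : ℕ, Y r ≤ X (r + (s - 2) + (5 : ℕ)) := fun r => by
    refine (H.monotone.reflect_lt ?_).le
    obtain ⟨n, hn⟩ : ∃ n : ℤ, n = r + (s - 2) + (5 : ℕ) := ⟨_, rfl⟩
    rw [← hn]
    have h1 := (abs_lt.1 (abs_map_orbitPt_sub_lt hq hb hα H hH x n)).1
    have h2 := (abs_lt.1 (abs_map_orbitPt_sub_lt hq hb hα H hH y r)).2
    have e : (n : ℝ) / q = r / q + (s + 1) / q + 2 * (1 / q) := by
      rw [hn]; push_cast; ring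
    rw [e] at h1
    push_cast at h2
    linarith
  have hsumY := sum_orbitPt (F := F) hφ hq hb y 0
  simp only [add_zero] at hsumY
  rw [← hsumY, ← sum_orbitPt (F := F) hφ hq hb x (s - 2), ← Finset.sum_sub_distrib]
  have hper : ∀ n, W (X (n + q)) = W (X n) + V := fun n => by
    rw [hX, orbitPt_add hq, hW]
  calc _ ≤ ∑ r ∈ Finset.range q, |φ (Y r) - φ (X (r + (s - 2)))| :=
        Finset.abs_sum_le_sum_abs _ _
    _ ≤ ∑ r ∈ Finset.range q, (W (X (r + (s - 2) + (5 : ℕ))) - W (X (r + (s - 2)))) := by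
        refine Finset.sum_le_sum fun r _ => (hφW _ _ (hXY r)).trans ?_
        exact sub_le_sub_right (hWmono (hYX r)) _
    _ = (5 : ℕ) * V := sum_shift_sub (u := fun n => W (X n)) hper (s - 2) 5
    _ = 5 * V := by norm_num
end

/-! ### Derivatives of the iterates -/

namespace C1Diffeo

variable (f : C1Diffeo)

lemma contDiff_iterate (n : ℕ) : ContDiff ℝ 1 f.F^[n] := by
  induction n with
  | zero => exact contDiff_id
  | succ n ih => rw [Function.iterate_succ']; exact f.contDiff.comp ih

lemma deriv_iterate_succ (n : ℕ) (x : ℝ) :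
    deriv f.F^[n + 1] x = deriv f.F^[n] (f.F x) * deriv f.F x := by
  rw [Function.iterate_succ]
  exact deriv_comp x ((f.contDiff_iterate n).differentiable one_ne_zero _)
    (f.contDiff.differentiable one_ne_zero _)

lemma deriv_iterate_pos (n : ℕ) (x : ℝ) : 0 < deriv f.F^[n] x := by
  induction n generalizing x with
  | zero => simp
  | succ n ih => rw [deriv_iterate_succ]; exact mul_pos (ih _) (f.deriv_pos x)

lemma log_deriv_iterate (n : ℕ) (x : ℝ) :
    Real.log (deriv f.F^[n] x) = ∑ i ∈ Finset.range n, Real.log (deriv f.F (f.F^[i] x)) := by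
  induction n generalizing x with
  | zero => simp
  | succ n ih =>
    rw [deriv_iterate_succ, Real.log_mul (f.deriv_iterate_pos _ _).ne' (f.deriv_pos x).ne', ih,
      Finset.sum_range_succ']
    simp

lemma exists_deriv_lower_bound : ∃ c, 0 < c ∧ ∀ x, c ≤ deriv f.F x := by
  have hcont : Continuous (deriv f.F) := f.contDiff.continuous_deriv le_rfl
  obtain ⟨x₀, -, hx₀⟩ := isCompact_Icc.exists_isMinOn (Set.nonempty_Icc.2 (zero_le_one (α := ℝ)))
    hcont.continuousOn
  refine ⟨deriv f.F x₀, f.deriv_pos _, fun x => ?_⟩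
  have hmod := (periodic_deriv_of_shift f.map_add_one).sub_zsmul_eq (x := x) ⌊x⌋
  rw [zsmul_eq_mul, mul_one, Int.self_sub_floor] at hmod
  rw [← hmod]
  exact hx₀ ⟨Int.fract_nonneg x, (Int.fract_lt_one x).le⟩

/-- Poincaré: `f` is monotonically (not necessarily continuously) semiconjugate to the rotation
by its rotation number. -/
lemma exists_semiconj : ∃ H : CircleDeg1Lift, ∀ x, H (f.F x) = f.rot + H x := by
  have h1 : IsUnit f.deg1 := CircleDeg1Lift.isUnit_iff_bijective.2
    ⟨f.left_inv.injective, f.right_inv.surjective⟩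
  obtain ⟨H, hH⟩ := CircleDeg1Lift.semiconj_of_isUnit_of_translationNumber_eq h1
    (CircleDeg1Lift.translate (Multiplicative.ofAdd f.rot)).isUnit
    (CircleDeg1Lift.translationNumber_translate f.rot).symm
  exact ⟨H, fun x => hH x⟩

/-- Denjoy's inequality, in the form needed here: the derivatives of the iterates `f ^ q k` are
bounded uniformly in `k`. -/
lemma exists_deriv_iterate_bound (hbv : BoundedVariationOn (deriv f.F) (Set.Icc 0 1))
    (hirr : Irrational f.rot) (q : ℕ → ℕ)
    (hq : ∀ k, (q k : ℝ) = (GenContFract.of f.rot).dens k) :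
    ∃ C, ∀ k x, deriv f.F^[q k] x ≤ C := by
  have hper := periodic_deriv_of_shift f.map_add_one
  obtain ⟨W, V, hW, hgW⟩ := exists_variation_majorant hper hbv
  obtain ⟨c, hc, hcg⟩ := f.exists_deriv_lower_bound
  obtain ⟨H, hH⟩ := f.exists_semiconj
  -- the logarithm is `1 / c`-Lipschitz on the range of the derivative
  have hlog : ∀ s t, c ≤ s → c ≤ t → Real.log s - Real.log t ≤ |s - t| / c := by
    intro s t hs ht
    have hs0 := hc.trans_le hs
    have ht0 := hc.trans_le ht
    rw [← Real.log_div hs0.ne' ht0.ne']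
    calc Real.log (s / t) ≤ s / t - 1 := Real.log_le_sub_one_of_pos (by positivity)
      _ = (s - t) / t := by field_simp
      _ ≤ |s - t| / t := by gcongr; exact le_abs_self _
      _ ≤ |s - t| / c := by gcongr
  refine ⟨Real.exp (5 * (V / c)), fun k x => ?_⟩
  obtain ⟨hqpos, p, ⟨b, m, hbm⟩, hα⟩ := exists_num_of_dens hirr hq k
  have hb : (q k : ℤ) ∣ b * p - 1 := ⟨-m, by linear_combination hbm⟩
  -- a point where the derivative equals its mean value one
  obtain ⟨y, -, hy⟩ := exists_deriv_eq_slope (f.F^[q k]) (zero_lt_one (α := ℝ))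
    (f.contDiff_iterate _).continuous.continuousOn
    ((f.contDiff_iterate _).differentiable one_ne_zero).differentiableOn
  have hy1 : deriv f.F^[q k] y = 1 := by
    have := iterate_map_add_one f.map_add_one (q k) 0
    rw [zero_add] at this
    rw [hy, this]; ring
  have hmain := abs_birkhoff_sub_le (F := f.F) (φ := fun t => Real.log (deriv f.F t))
    (W := fun t => W t / c) (V := V / c) hqpos hb hα H hH
    (fun t => by simp only [hper t]) (fun t => by simp only [hW]; ring)
    (fun s t hst => by
      rw [← sub_div]
      have h0 : |deriv f.F t - deriv f.F s| / c ≤ (W t - W s) / c := by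
        gcongr; exact hgW s t hst
      rw [abs_sub_le_iff]
      refine ⟨(hlog _ _ (hcg t) (hcg s)).trans h0, (hlog _ _ (hcg s) (hcg t)).trans ?_⟩
      rwa [abs_sub_comm]) y x
  rw [← f.log_deriv_iterate, ← f.log_deriv_iterate, hy1, Real.log_one, sub_zero] at hmain
  rw [← Real.log_le_iff_le_exp (f.deriv_iterate_pos _ _)]
  exact (le_abs_self _).trans hmain

/-! ### Functions on the circle -/

lemma DfIter_coe (n : ℕ) (x : ℝ) : f.DfIter n (x : 𝕊) = deriv f.F^[n] x := rfl

lemma Df_coe (x : ℝ) : f.Df (x : 𝕊) = deriv f.F x := rfl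

lemma toCircle_coe (x : ℝ) : f.toCircle (x : 𝕊) = (f.F x : 𝕊) := rfl

lemma DfIter_zero (x : 𝕊) : f.DfIter 0 x = 1 := by
  induction x using QuotientAddGroup.induction_on with
  | H x => rw [DfIter_coe]; simp

lemma DfIter_succ (n : ℕ) (x : 𝕊) :
    f.DfIter (n + 1) x = f.DfIter n (f.toCircle x) * f.Df x := by
  induction x using QuotientAddGroup.induction_on with
  | H x => rw [DfIter_coe, toCircle_coe, DfIter_coe, Df_coe, deriv_iterate_succ]

lemma continuous_DfIter (n : ℕ) : Continuous (f.DfIter n) :=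
  continuous_coinduced_dom.2 ((f.contDiff_iterate n).continuous_deriv le_rfl)

lemma integral_DfIter (n : ℕ) : ∫ x, f.DfIter n x ∂(volume : Measure 𝕊) = 1 := by
  rw [← UnitAddCircle.intervalIntegral_preimage 0]
  simp only [DfIter_coe]
  rw [intervalIntegral.integral_deriv_eq_sub
    (fun x _ => (f.contDiff_iterate n).differentiable one_ne_zero x)
    (((f.contDiff_iterate n).continuous_deriv le_rfl).intervalIntegrable _ _),
    iterate_map_add_one f.map_add_one]
  ring

lemma integrable_of_continuous {u : 𝕊 → ℝ} (hu : Continuous u) : Integrable u volume :=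
  hu.integrable_of_hasCompactSupport (HasCompactSupport.of_compactSpace u)

end C1Diffeo

/-- **Lemma.** For a `C^{1+bv}` circle diffeomorphism `f` of irrational rotation number, the
explicit continuous functions `ŵ_k := 1 - (1/q_k)[1 + Df + ⋯ + D(f^{q_k-1})]` have zero
Lebesgue mean and satisfy `(ŵ_k ∘ f)·Df - ŵ_k → Df - 1` uniformly, where `(q_k)` are the
denominators of the continued fraction convergents of the rotation number. -/
theorem key_lemma
    (f : C1Diffeo) (hbv : BoundedVariationOn (deriv f.F) (Set.Icc 0 1))
    (hirr : Irrational f.rot)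
    (q : ℕ → ℕ) (hq : ∀ k, (q k : ℝ) = (GenContFract.of f.rot).dens k)
    (w : ℕ → 𝕊 → ℝ)
    (hw : ∀ k x, w k x = 1 - (q k : ℝ)⁻¹ * ∑ j ∈ Finset.range (q k), f.DfIter j x) :
    (∀ k, Continuous (w k)) ∧
      TendstoUniformly (fun k x => w k (f.toCircle x) * f.Df x - w k x)
        (fun x => f.Df x - 1) atTop ∧
      ∀ k, ∫ x, w k x ∂(volume : Measure 𝕊) = 0 := by
  have hcont : ∀ k, Continuous (w k) := fun k => by
    rw [funext (hw k)]
    exact continuous_const.sub (continuous_const.mul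
      (continuous_finsetSum _ fun j _ => f.continuous_DfIter j))
  have hqpos : ∀ k, 0 < (q k : ℝ) := fun k => by
    exact_mod_cast (exists_num_of_dens hirr hq k).1
  refine ⟨hcont, ?_, fun k => ?_⟩
  · obtain ⟨C, hC⟩ := f.exists_deriv_iterate_bound hbv hirr q hq
    -- the sums telescope
    have hkey : ∀ k x, f.Df x - 1 - (w k (f.toCircle x) * f.Df x - w k x) =
        (q k : ℝ)⁻¹ * (f.DfIter (q k) x - 1) := fun k x => by
      have htel := Finset.sum_range_sub (fun j => f.DfIter j x) (q k)
      simp only [f.DfIter_succ, Finset.sum_sub_distrib, ← Finset.sum_mul, f.DfIter_zero] at htel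
      rw [hw, hw, ← htel]
      ring
    have hbound : ∀ k x, |f.DfIter (q k) x - 1| ≤ C + 1 := fun k x => by
      induction x using QuotientAddGroup.induction_on with
      | H x =>
        rw [f.DfIter_coe, abs_sub_le_iff]
        have h1 := hC k x
        have h2 := f.deriv_iterate_pos (q k) x
        constructor <;> linarith
    have hlim : Tendsto (fun k => (q k : ℝ)⁻¹ * (C + 1)) atTop (𝓝 0) := by
      simpa using (tendsto_dens hirr hq).inv_tendsto_atTop.mul_const (C + 1)
    rw [Metric.tendstoUniformly_iff]
    intro ε hε
    filter_upwards [hlim.eventually_lt_const hε] with k hk x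
    rw [Real.dist_eq, hkey, abs_mul, abs_of_pos (inv_pos.2 (hqpos k))]
    exact (mul_le_mul_of_nonneg_left (hbound k x) (inv_pos.2 (hqpos k)).le).trans_lt hk
  · have hint : ∀ j, Integrable (f.DfIter j) (volume : Measure 𝕊) := fun j =>
      C1Diffeo.integrable_of_continuous (f.continuous_DfIter j)
    simp only [hw]
    rw [integral_sub (integrable_const _)
      ((integrable_finsetSum _ fun j _ => hint j).const_mul _), integral_const_mul,
      integral_finsetSum _ fun j _ => hint j]
    have hvol : (volume : Measure 𝕊).real univ = 1 := by
      rw [measureReal_def, UnitAddCircle.measure_univ, ENNReal.toReal_one]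
    simp [f.integral_DfIter, (hqpos k).ne', hvol]
end
end

section
/- Let f be an orientation-preserving C^1 circle diffeomorphism of irrational rotation number with unique invariant probability measure μ, let λ be the normalized Lebesgue measure, and let u be a C^1 function on the circle with ∫ u dμ = 0. Suppose (w_n) is a sequence of continuous functions on the circle such that (w_n ∘ f)·Df − w_n converges uniformly to u′ and ∫ w_n dλ = 0 for all n. Define v_n(x) := ∫_0^x w_n dλ (well defined as a function on the circle since ∫ w_n dλ = 0) and c_n := u(0) − ∫_0^{f(0)} w_n dλ. Then v_n ∘ f − v_n + c_n converges to u in the C^1 topology, and moreover c_n → 0, so that v_n ∘ f − v_n converges to u in the C^1 topology. -/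
/-!
The lift of `v_n ∘ f - v_n` has derivative `(w_n ∘ f) · Df - w_n` by the fundamental theorem of
calculus and the chain rule, so the derivatives converge uniformly by hypothesis
(`hasDerivAt_lft_coboundary`). The constant `c_n` is chosen so that `v_n ∘ f - v_n + c_n` agrees
with `u` at `0`; as the circle has length one, the mean value inequality bounds the distance of
these functions by that of their derivatives (`abs_sub_le_of_abs_derivS_sub_le`), which gives the
`C¹` convergence. Finally `∫ (v_n ∘ f - v_n) dμ = 0` by invariance of `μ` and `∫ u dμ = 0`, so `c_n`
is the `μ`-integral of `v_n ∘ f - v_n + c_n - u`, which tends to `0` uniformly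
(`abs_le_of_abs_coboundary_sub_le`).
-/

open MeasureTheory Function Filter Set
open scoped Topology

noncomputable section

lemma derivS_coe (g : 𝕊 → ℝ) (x : ℝ) : derivS g (x : 𝕊) = deriv (lft g) x := rfl

lemma continuous_of_continuous_lft {g : 𝕊 → ℝ} (hg : Continuous (lft g)) : Continuous g :=
  isQuotientMap_quotient_mk'.continuous_iff.2 hg

lemma hasDerivAt_lft_primitive {w v : 𝕊 → ℝ} (hw : Continuous w)
    (hv : ∀ x : ℝ, v (x : 𝕊) = ∫ s in (0:ℝ)..x, w (s : 𝕊)) (x : ℝ) :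
    HasDerivAt (lft v) (w (x : 𝕊)) x := by
  have hcont : Continuous fun s : ℝ => w (s : 𝕊) := hw.comp (AddCircle.continuous_mk' 1)
  have hlft : lft v = fun x : ℝ => ∫ s in (0:ℝ)..x, w (s : 𝕊) := funext hv
  rw [hlft]
  exact hcont.integral_hasStrictDerivAt 0 x |>.hasDerivAt

lemma hasDerivAt_lft_coboundary (f : C1Diffeo) {w v : 𝕊 → ℝ} (hw : Continuous w)
    (hv : ∀ x : ℝ, v (x : 𝕊) = ∫ s in (0:ℝ)..x, w (s : 𝕊)) (b x : ℝ) :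
    HasDerivAt (lft fun y => v (f.toCircle y) - v y + b)
      (w (f.toCircle (x : 𝕊)) * f.Df (x : 𝕊) - w (x : 𝕊)) x := by
  have hF : HasDerivAt f.F (deriv f.F x) x :=
    (f.contDiff.differentiable one_ne_zero x).hasDerivAt
  exact (((hasDerivAt_lft_primitive hw hv (f.F x)).comp x hF).sub
    (hasDerivAt_lft_primitive hw hv x)).add_const b

lemma derivS_coboundary (f : C1Diffeo) {w v : 𝕊 → ℝ} (hw : Continuous w)
    (hv : ∀ x : ℝ, v (x : 𝕊) = ∫ s in (0:ℝ)..x, w (s : 𝕊)) (b : ℝ) :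
    derivS (fun y => v (f.toCircle y) - v y + b) =
      fun y => w (f.toCircle y) * f.Df y - w y := by
  funext y
  induction y using QuotientAddGroup.induction_on with
  | H x => exact (hasDerivAt_lft_coboundary f hw hv b x).deriv

/-- Mean value inequality on the circle: two differentiable functions that agree at `0` are at
most as far apart as their derivatives, since every point has a representative in `[0, 1)`. -/
lemma abs_sub_le_of_abs_derivS_sub_le {g u : 𝕊 → ℝ} (hg : Differentiable ℝ (lft g))
    (hu : Differentiable ℝ (lft u)) (h0 : g ((0 : ℝ) : 𝕊) = u ((0 : ℝ) : 𝕊)) {C : ℝ}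
    (hC : ∀ y, |derivS g y - derivS u y| ≤ C) (y : 𝕊) : |g y - u y| ≤ C := by
  obtain ⟨x, ⟨hx0, hx1⟩, rfl⟩ : ∃ x ∈ Ico (0 : ℝ) 1, (x : 𝕊) = y := by
    have h := AddCircle.coe_image_Ico_eq (1 : ℝ) 0
    rw [zero_add] at h
    have hy : y ∈ ((↑) : ℝ → 𝕊) '' Ico (0 : ℝ) 1 := h ▸ mem_univ y
    exact hy
  have hC0 : 0 ≤ C := (abs_nonneg _).trans (hC 0)
  have hmv := norm_image_sub_le_of_norm_deriv_le_segment' (f := fun t => lft g t - lft u t)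
    (f' := fun t => deriv (lft g) t - deriv (lft u) t) (a := 0) (b := 1) (C := C)
    (fun t _ => ((hg t).hasDerivAt.sub (hu t).hasDerivAt).hasDerivWithinAt)
    (fun t _ => hC (t : 𝕊)) x ⟨hx0, hx1.le⟩
  have h0' : lft g 0 - lft u 0 = 0 := sub_eq_zero.2 h0
  rw [h0', sub_zero, sub_zero, Real.norm_eq_abs] at hmv
  calc |g x - u x| ≤ C * x := hmv
    _ ≤ C := mul_le_of_le_one_right hC0 hx1.le

/-- An invariant probability measure integrates the coboundary `v ∘ T - v` to zero, so the constant
`b` is the integral of `v ∘ T - v + b - u` whenever `u` has mean zero. -/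
lemma abs_le_of_abs_coboundary_sub_le {T : 𝕊 → 𝕊} {μ : Measure 𝕊} [IsProbabilityMeasure μ]
    (hT : MeasurePreserving T μ μ) {v u : 𝕊 → ℝ} (hv : Continuous v) (hu : Continuous u)
    (hmean : ∫ x, u x ∂μ = 0) {b C : ℝ} (hC : ∀ y, |v (T y) - v y + b - u y| ≤ C) :
    |b| ≤ C := by
  have hvi : Integrable v μ :=
    hv.integrable_of_hasCompactSupport (HasCompactSupport.of_compactSpace v)
  have hui : Integrable u μ :=
    hu.integrable_of_hasCompactSupport (HasCompactSupport.of_compactSpace u)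
  have hvTi : Integrable (fun y => v (T y)) μ := hT.integrable_comp_of_integrable hvi
  have hvT : ∫ y, v (T y) ∂μ = ∫ y, v y ∂μ := by
    rw [← integral_map hT.measurable.aemeasurable hv.aestronglyMeasurable, hT.map_eq]
  have hint : ∫ y, (v (T y) - v y + b - u y) ∂μ = b := by
    have hvTv : Integrable (fun y => v (T y) - v y) μ := hvTi.sub hvi
    have hvTvb : Integrable (fun y => v (T y) - v y + b) μ := hvTv.add (integrable_const b)
    rw [integral_sub hvTvb hui, integral_add hvTv (integrable_const b), integral_sub hvTi hvi,
      hvT, hmean]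
    simp
  have h := norm_integral_le_of_norm_le_const (μ := μ) (f := fun y => v (T y) - v y + b - u y)
    (ae_of_all μ hC)
  rw [hint] at h
  simpa using h

/-- Integrating the approximating sequence `w_n` of the key Proposition: the `C¹` functions
`v_n(x) := ∫_0^x w_n dλ` and constants `c_n := u(0) - ∫_0^{f(0)} w_n dλ` satisfy
`v_n ∘ f - v_n + c_n → u` in the `C¹` topology, `c_n → 0`, and hence
`v_n ∘ f - v_n → u` in the `C¹` topology. -/
theorem coboundary_approximation_from_derivative_data
    (f : C1Diffeo) (hirr : Irrational f.rot)
    (μ : Measure 𝕊) [IsProbabilityMeasure μ] (hinv : MeasurePreserving f.toCircle μ μ)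
    (u : 𝕊 → ℝ) (hu : IsC1 u) (hmean : ∫ x, u x ∂μ = 0)
    (w : ℕ → 𝕊 → ℝ) (hwc : ∀ n, Continuous (w n))
    (hwconv : TendstoUniformly (fun n x => w n (f.toCircle x) * f.Df x - w n x)
      (derivS u) atTop)
    (hwzero : ∀ n, ∫ x, w n x ∂(volume : Measure 𝕊) = 0)
    (v : ℕ → 𝕊 → ℝ) (hv : ∀ (n : ℕ) (x : ℝ), v n (x : 𝕊) = ∫ s in (0:ℝ)..x, w n (s : 𝕊))
    (c : ℕ → ℝ) (hc : ∀ n, c n = u ((0 : ℝ) : 𝕊) - ∫ s in (0:ℝ)..(f.F 0), w n (s : 𝕊)) :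
    (TendstoUniformly (fun n x => v n (f.toCircle x) - v n x + c n) u atTop ∧
      TendstoUniformly (fun n => derivS (fun y => v n (f.toCircle y) - v n y + c n))
        (derivS u) atTop) ∧
    Tendsto c atTop (𝓝 0) ∧
    (TendstoUniformly (fun n x => v n (f.toCircle x) - v n x) u atTop ∧
      TendstoUniformly (fun n => derivS (fun y => v n (f.toCircle y) - v n y))
        (derivS u) atTop) := by
  have hud : Differentiable ℝ (lft u) := ContDiff.differentiable hu one_ne_zero
  have hderiv (b : ℕ → ℝ) :
      TendstoUniformly (fun n => derivS (fun y => v n (f.toCircle y) - v n y + b n))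
        (derivS u) atTop := by
    have hfun : (fun n => derivS (fun y => v n (f.toCircle y) - v n y + b n)) =
        fun n x => w n (f.toCircle x) * f.Df x - w n x :=
      funext fun n => derivS_coboundary f (hwc n) (hv n) (b n)
    rw [hfun]
    exact hwconv
  have hbound : ∀ ε > 0, ∀ᶠ n in atTop,
      ∀ y, |v n (f.toCircle y) - v n y + c n - u y| ≤ ε := by
    intro ε hε
    filter_upwards [Metric.tendstoUniformly_iff.1 (hderiv c) ε hε] with n hn
    refine abs_sub_le_of_abs_derivS_sub_le (g := fun y => v n (f.toCircle y) - v n y + c n)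
      (fun x => (hasDerivAt_lft_coboundary f (hwc n) (hv n) (c n) x).differentiableAt) hud ?_ ?_
    · have hf0 : v n (f.toCircle ((0 : ℝ) : 𝕊)) = ∫ s in (0:ℝ)..(f.F 0), w n (s : 𝕊) :=
        hv n (f.F 0)
      have hv0 : v n ((0 : ℝ) : 𝕊) = 0 := by rw [hv n 0, intervalIntegral.integral_same]
      simp only [hf0, hv0, hc n]
      ring
    · intro y
      have h := hn y
      rw [dist_comm, Real.dist_eq] at h
      exact h.le
  have hconv : TendstoUniformly (fun n x => v n (f.toCircle x) - v n x + c n) u atTop := by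
    rw [Metric.tendstoUniformly_iff]
    intro ε hε
    filter_upwards [hbound (ε / 2) (half_pos hε)] with n hn y
    rw [dist_comm, Real.dist_eq]
    exact (hn y).trans_lt (half_lt_self hε)
  have hc0 : Tendsto c atTop (𝓝 0) := by
    rw [Metric.tendsto_nhds]
    intro ε hε
    filter_upwards [hbound (ε / 2) (half_pos hε)] with n hn
    have hvn : Continuous (v n) := continuous_of_continuous_lft <|
      continuous_iff_continuousAt.2 fun x =>
        (hasDerivAt_lft_primitive (hwc n) (hv n) x).continuousAt
    have h := abs_le_of_abs_coboundary_sub_le hinv hvn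
      (continuous_of_continuous_lft hud.continuous) hmean hn
    rw [Real.dist_eq, sub_zero]
    exact h.trans_lt (half_lt_self hε)
  refine ⟨⟨hconv, hderiv c⟩, hc0, ?_, ?_⟩
  · have h := hconv.sub (hc0.tendstoUniformly_const (α := 𝕊))
    have hfun : ((fun n x => v n (f.toCircle x) - v n x + c n) - fun n (_ : 𝕊) => c n) =
        fun n x => v n (f.toCircle x) - v n x := by
      funext n x
      simp
    have hlim : (u - fun _ => (0 : ℝ)) = u := by
      funext x
      simp
    rwa [hfun, hlim] at h
  · simpa only [add_zero] using hderiv fun _ => 0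
end
end

section
/- Let f be an orientation-preserving C^1 circle diffeomorphism and suppose that every finite signed Borel measure L on the circle satisfying ∫ φ dL = ∫ (φ ∘ f)·Df dL for all continuous functions φ is a scalar multiple of the normalized Lebesgue measure λ. Then every continuous real-valued function g on the circle with ∫ g dλ = 0 lies in the uniform closure of the set of functions { (w ∘ f)·Df − w : w continuous on the circle }; equivalently, there exists a sequence of continuous functions w̄_n such that (w̄_n ∘ f)·Df − w̄_n converges uniformly to g. -/
/-!
The proof is Hahn–Banach duality for the subspace `S = {(w ∘ f)·Df - w}` of `C(𝕊, ℝ)`. If `g` were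
not in the closure of `S`, some continuous functional `ℓ` would vanish on `S` but not at `g`. By the
Riesz representation theorem `ℓ` is integration against a signed measure; vanishing on `S` says
precisely that this measure is 1-automorphic, so it is a multiple of Lebesgue measure, and then
`∫ g = 0` forces `ℓ g = 0`, a contradiction.

Mathlib's Riesz–Markov–Kakutani theorem concerns positive functionals, so the signed version is
derived here (`exists_integral_sub_integral_eq`) from the Jordan decomposition of `ℓ`: on
nonnegative functions, its positive part is `a ↦ sup {ℓ b | 0 ≤ b ≤ a}`, which is additive thanks to
the Riesz decomposition property (if `b ≤ a₁ + a₂`, then `b = b ⊓ a₁ + h` with `h ≤ a₂`).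
-/

open MeasureTheory Function Filter Set
open scoped Topology

noncomputable section

open scoped NNReal CompactlySupported

section SignedRiesz

variable {X : Type*} [TopologicalSpace X]

/-- A nonnegative (compactly supported) continuous function, as an element of `C(X, ℝ)`. -/
def nnToC (a : C_c(X, ℝ≥0)) : C(X, ℝ) :=
  ⟨fun x => (a x : ℝ), NNReal.continuous_coe.comp a.continuous⟩

lemma nnToC_add (a b : C_c(X, ℝ≥0)) : nnToC (a + b) = nnToC a + nnToC b := by
  ext x; simp [nnToC]

lemma nnToC_smul (c : ℝ≥0) (a : C_c(X, ℝ≥0)) : nnToC (c • a) = (c : ℝ) • nnToC a := by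
  ext x; simp [nnToC]

lemma nnToC_zero : nnToC (0 : C_c(X, ℝ≥0)) = 0 := by
  ext x; simp [nnToC]

/-- The positive part of the functional `ℓ`, evaluated at a nonnegative function. -/
def posVal (ℓ : StrongDual ℝ C(X, ℝ)) (a : C_c(X, ℝ≥0)) : ℝ :=
  ⨆ b : {b : C_c(X, ℝ≥0) // b ≤ a}, ℓ (nnToC b)

variable (ℓ : StrongDual ℝ C(X, ℝ))

lemma posVal_le {a : C_c(X, ℝ≥0)} {C : ℝ} (h : ∀ b ≤ a, ℓ (nnToC b) ≤ C) : posVal ℓ a ≤ C := by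
  have : Nonempty {b : C_c(X, ℝ≥0) // b ≤ a} := ⟨⟨a, le_rfl⟩⟩
  exact ciSup_le fun b => h b b.2

variable [CompactSpace X]

lemma norm_nnToC_le {a b : C_c(X, ℝ≥0)} (h : b ≤ a) : ‖nnToC b‖ ≤ ‖nnToC a‖ := by
  refine (ContinuousMap.norm_le _ (norm_nonneg _)).2 fun x => ?_
  refine le_trans ?_ ((nnToC a).norm_coe_le_norm x)
  have := h x
  simpa [nnToC] using this

lemma le_posVal {a b : C_c(X, ℝ≥0)} (h : b ≤ a) : ℓ (nnToC b) ≤ posVal ℓ a := by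
  refine le_ciSup (f := fun b : {b : C_c(X, ℝ≥0) // b ≤ a} => ℓ (nnToC b))
    ⟨‖ℓ‖ * ‖nnToC a‖, ?_⟩ ⟨b, h⟩
  rintro _ ⟨⟨b', hb'⟩, rfl⟩
  exact (le_abs_self _).trans ((ℓ.le_opNorm _).trans
    (mul_le_mul_of_nonneg_left (norm_nnToC_le hb') (norm_nonneg _)))

lemma posVal_nonneg (a : C_c(X, ℝ≥0)) : 0 ≤ posVal ℓ a := by
  have h : (0 : C_c(X, ℝ≥0)) ≤ a := fun x => zero_le
  simpa [nnToC_zero] using le_posVal ℓ h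

lemma posVal_add (a₁ a₂ : C_c(X, ℝ≥0)) : posVal ℓ (a₁ + a₂) = posVal ℓ a₁ + posVal ℓ a₂ := by
  apply le_antisymm
  · refine posVal_le ℓ fun b hb => ?_
    -- Riesz decomposition of `b ≤ a₁ + a₂`.
    obtain ⟨h, hh⟩ := CompactlySupportedContinuousMap.exists_add_of_le
      (show b ⊓ a₁ ≤ b from inf_le_left)
    have hh2 : h ≤ a₂ := by
      intro x
      have h1 : min (b x) (a₁ x) + h x = b x := DFunLike.congr_fun hh x
      have h2 : b x ≤ a₁ x + a₂ x := hb x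
      show h x ≤ a₂ x
      rcases le_total (b x) (a₁ x) with h3 | h3
      · rw [min_eq_left h3] at h1
        have : h x = 0 := by simpa using h1
        simp [this]
      · rw [min_eq_right h3] at h1
        rw [← h1] at h2
        exact le_of_add_le_add_left h2
    rw [← hh, nnToC_add, map_add]
    exact add_le_add (le_posVal ℓ inf_le_right) (le_posVal ℓ hh2)
  · rw [← le_sub_iff_add_le]
    refine posVal_le ℓ fun b₁ h₁ => ?_
    rw [le_sub_comm]
    refine posVal_le ℓ fun b₂ h₂ => ?_
    rw [le_sub_iff_add_le', ← map_add, ← nnToC_add]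
    exact le_posVal ℓ fun x => add_le_add (h₁ x) (h₂ x)

lemma mul_posVal_le (c : ℝ≥0) (a : C_c(X, ℝ≥0)) : (c : ℝ) * posVal ℓ a ≤ posVal ℓ (c • a) := by
  rcases eq_or_ne c 0 with rfl | hc
  · simpa using posVal_nonneg ℓ _
  have hc' : (0 : ℝ) < c := by exact_mod_cast pos_iff_ne_zero.2 hc
  rw [← le_div_iff₀' hc']
  refine posVal_le ℓ fun b hb => ?_
  rw [le_div_iff₀' hc', ← smul_eq_mul, ← map_smul, ← nnToC_smul]
  refine le_posVal ℓ fun x => ?_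
  have := hb x
  exact mul_le_mul_right this c

lemma posVal_smul (c : ℝ≥0) (a : C_c(X, ℝ≥0)) : posVal ℓ (c • a) = c * posVal ℓ a := by
  refine le_antisymm ?_ (mul_posVal_le ℓ c a)
  rcases eq_or_ne c 0 with rfl | hc
  · have h := posVal_add ℓ (0 : C_c(X, ℝ≥0)) 0
    simp at h
    simp [h]
  have hc' : (0 : ℝ) < c := by exact_mod_cast pos_iff_ne_zero.2 hc
  have h := mul_posVal_le ℓ c⁻¹ (c • a)
  rw [smul_smul, inv_mul_cancel₀ hc, one_smul, NNReal.coe_inv] at h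
  rwa [← inv_mul_le_iff₀ hc']

/-- The positive part of the functional `ℓ`, as a linear functional on nonnegative functions. -/
def posFun : C_c(X, ℝ≥0) →ₗ[ℝ≥0] ℝ≥0 where
  toFun a := ⟨posVal ℓ a, posVal_nonneg ℓ a⟩
  map_add' a b := NNReal.eq (posVal_add ℓ a b)
  map_smul' c a := NNReal.eq (posVal_smul ℓ c a)

/-- The negative part of the functional `ℓ` on nonnegative functions, defined as the positive part
minus `ℓ`. -/
def negFun : C_c(X, ℝ≥0) →ₗ[ℝ≥0] ℝ≥0 where
  toFun a := ⟨posVal ℓ a - ℓ (nnToC a), sub_nonneg.2 (le_posVal ℓ le_rfl)⟩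
  map_add' a b := NNReal.eq (by
    show posVal ℓ (a + b) - ℓ (nnToC (a + b))
      = (posVal ℓ a - ℓ (nnToC a)) + (posVal ℓ b - ℓ (nnToC b))
    rw [posVal_add, nnToC_add, map_add]; ring)
  map_smul' c a := NNReal.eq (by
    show posVal ℓ (c • a) - ℓ (nnToC (c • a)) = c * (posVal ℓ a - ℓ (nnToC a))
    rw [posVal_smul, nnToC_smul, map_smul, smul_eq_mul]; ring)

/-- **Riesz representation for signed functionals**: a continuous linear functional on `C(X, ℝ)`,
`X` compact Hausdorff, is the difference of the integrals against two finite measures. -/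
lemma exists_integral_sub_integral_eq [T2Space X] [MeasurableSpace X] [BorelSpace X] :
    ∃ μ₁ μ₂ : Measure X, IsFiniteMeasure μ₁ ∧ IsFiniteMeasure μ₂ ∧
      ∀ φ : C(X, ℝ), ℓ φ = ∫ x, φ x ∂μ₁ - ∫ x, φ x ∂μ₂ := by
  have hfin : ∀ Λ : C_c(X, ℝ≥0) →ₗ[ℝ≥0] ℝ≥0, IsFiniteMeasure (NNRealRMK.rieszMeasure Λ) :=
    fun Λ => inferInstance
  refine ⟨NNRealRMK.rieszMeasure (posFun ℓ), NNRealRMK.rieszMeasure (negFun ℓ),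
    hfin _, hfin _, fun φ => ?_⟩
  have hnn : ∀ a : C_c(X, ℝ≥0), ℓ (nnToC a)
      = ∫ x, nnToC a x ∂NNRealRMK.rieszMeasure (posFun ℓ)
        - ∫ x, nnToC a x ∂NNRealRMK.rieszMeasure (negFun ℓ) := by
    intro a
    have h1 := NNRealRMK.integral_rieszMeasure (posFun ℓ) a
    have h2 := NNRealRMK.integral_rieszMeasure (negFun ℓ) a
    change ∫ x, nnToC a x ∂_ = posVal ℓ a at h1
    change ∫ x, nnToC a x ∂_ = posVal ℓ a - ℓ (nnToC a) at h2
    rw [h1, h2]; ring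
  let Φ : C_c(X, ℝ) := CompactlySupportedContinuousMap.continuousMapEquiv φ
  have hφ : φ = nnToC Φ.nnrealPart - nnToC (-Φ).nnrealPart := by
    ext x
    have h := DFunLike.congr_fun
      (CompactlySupportedContinuousMap.nnrealPart_sub_nnrealPart_neg Φ) x
    rw [CompactlySupportedContinuousMap.sub_apply, CompactlySupportedContinuousMap.toReal_apply,
      CompactlySupportedContinuousMap.toReal_apply] at h
    exact h.symm
  have hint : ∀ (ψ : C(X, ℝ)) (μ : Measure X) [IsFiniteMeasure μ], Integrable ψ μ :=
    fun ψ μ _ => ψ.continuous.integrable_of_hasCompactSupport (HasCompactSupport.of_compactSpace ψ)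
  have := hfin (posFun ℓ)
  have := hfin (negFun ℓ)
  rw [hφ, map_sub, hnn, hnn]
  simp only [ContinuousMap.sub_apply]
  rw [integral_sub (hint _ _) (hint _ _), integral_sub (hint _ _) (hint _ _)]
  ring

end SignedRiesz

lemma C1Diffeo.continuous_toCircle (f : C1Diffeo) : Continuous f.toCircle :=
  continuous_quot_lift _ ((AddCircle.continuous_mk' 1).comp f.contDiff.continuous)

lemma C1Diffeo.continuous_Df (f : C1Diffeo) : Continuous f.Df :=
  continuous_quot_lift _ (f.contDiff.continuous_deriv le_rfl)

/-- The operator `w ↦ (w ∘ f)·Df - w` on continuous functions, whose range is the space of twisted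
coboundaries. -/
def C1Diffeo.coboundary (f : C1Diffeo) : C(𝕊, ℝ) →ₗ[ℝ] C(𝕊, ℝ) where
  toFun w := ⟨fun x => w (f.toCircle x) * f.Df x - w x,
    ((w.continuous.comp f.continuous_toCircle).mul f.continuous_Df).sub w.continuous⟩
  map_add' v w := by ext x; simp; ring
  map_smul' c w := by ext x; simp; ring

/-- Hahn–Banach: a point outside the closure of a subspace is detected by a continuous functional
vanishing on the subspace. -/
lemma exists_dual_vanishing {E : Type*} [NormedAddCommGroup E] [NormedSpace ℝ E]
    (S : Submodule ℝ E) {g : E} (hg : g ∉ closure (S : Set E)) :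
    ∃ ℓ : StrongDual ℝ E, (∀ v ∈ S, ℓ v = 0) ∧ ℓ g ≠ 0 := by
  obtain ⟨ℓ, u, hu, hgu⟩ :=
    geometric_hahn_banach_closed_point S.convex.closure isClosed_closure hg
  have h0 : 0 < u := by simpa using hu 0 (subset_closure S.zero_mem)
  refine ⟨ℓ, fun v hv => ?_, (h0.trans hgu).ne'⟩
  by_contra hne
  -- A functional bounded above on a subspace vanishes there: rescale `v` so that `ℓ` takes value `u`.
  have := hu ((u / ℓ v) • v) (subset_closure (S.smul_mem _ hv))
  rw [map_smul, smul_eq_mul, div_mul_cancel₀ _ hne] at this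
  exact lt_irrefl _ this

/-- If the only signed measures on the circle that are 1-automorphic for `f` (written as
differences of finite measures) are the scalar multiples of Lebesgue measure, then every
continuous function of zero Lebesgue mean is a uniform limit of "twisted coboundaries"
`(w ∘ f)·Df - w` with `w` continuous (Hahn–Banach separation argument). -/
theorem twisted_coboundaries_dense_of_unique_automorphic_signed_measure
    (f : C1Diffeo)
    (huniq : ∀ (μ₁ μ₂ : Measure 𝕊), IsFiniteMeasure μ₁ → IsFiniteMeasure μ₂ →
      (∀ φ : 𝕊 → ℝ, Continuous φ →
        ∫ x, φ x ∂μ₁ - ∫ x, φ x ∂μ₂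
          = ∫ x, φ (f.toCircle x) * f.Df x ∂μ₁ - ∫ x, φ (f.toCircle x) * f.Df x ∂μ₂) →
      ∃ c : ℝ, ∀ φ : 𝕊 → ℝ, Continuous φ →
        ∫ x, φ x ∂μ₁ - ∫ x, φ x ∂μ₂ = c * ∫ x, φ x ∂(volume : Measure 𝕊))
    (g : 𝕊 → ℝ) (hg : Continuous g) (hgzero : ∫ x, g x ∂(volume : Measure 𝕊) = 0) :
    ∃ w : ℕ → 𝕊 → ℝ, (∀ n, Continuous (w n)) ∧
      TendstoUniformly (fun n x => w n (f.toCircle x) * f.Df x - w n x) g atTop := by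
  let G : C(𝕊, ℝ) := ⟨g, hg⟩
  have hmem : G ∈ closure (LinearMap.range f.coboundary : Set C(𝕊, ℝ)) := by
    by_contra hG
    obtain ⟨ℓ, hℓ, hne⟩ := exists_dual_vanishing _ hG
    obtain ⟨μ₁, μ₂, h₁, h₂, hμ⟩ := exists_integral_sub_integral_eq ℓ
    obtain ⟨c, hc⟩ := huniq μ₁ μ₂ h₁ h₂ (fun φ hφ => by
      let Φ : C(𝕊, ℝ) := ⟨φ, hφ⟩
      let Ψ : C(𝕊, ℝ) := ⟨fun x => φ (f.toCircle x) * f.Df x,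
        (hφ.comp f.continuous_toCircle).mul f.continuous_Df⟩
      have h0 : ℓ (Ψ - Φ) = 0 := hℓ _ ⟨Φ, rfl⟩
      rw [map_sub, sub_eq_zero] at h0
      exact (hμ Φ).symm.trans (h0.symm.trans (hμ Ψ)))
    refine hne ((hμ G).trans ((hc g hg).trans ?_))
    rw [hgzero, mul_zero]
  obtain ⟨v, hv, hlim⟩ := mem_closure_iff_seq_limit.1 hmem
  choose w hw using hv
  refine ⟨fun n => w n, fun n => (w n).continuous, ?_⟩
  rw [ContinuousMap.tendsto_iff_tendstoLocallyUniformly,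
    tendstoLocallyUniformly_iff_tendstoUniformly_of_compactSpace] at hlim
  simp_rw [← hw] at hlim
  exact hlim
end
end

section
/- Let f be an orientation-preserving C^1 circle diffeomorphism of irrational rotation number admitting a minimal invariant Cantor set K, let μ be the unique f-invariant probability measure (whose support is K), and let x_0 be a point in a connected component I of the complement of K such that S := Σ_{n ∈ ℤ} D(f^n)(x_0) < ∞. Let ν := (1/S) Σ_{n ∈ ℤ} D(f^n)(x_0) · δ_{f^n(x_0)} and L(u) := ∫ u′ dν for C^1 functions u. Then for every C^1 function u supported in I one has ∫ u dμ = 0 and L(u) = u′(x_0)/S; in particular, L attains every real value on C^1 functions of zero μ-mean, and hence L is not a scalar multiple of integration against μ. -/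
/-!
The component `I` of `x₀` in the complement of `K` is wandering: `fⁿ(x₀) ∉ I` for `n ≠ 0`. To see
this, lift to `ℝ`. The component `I` is covered by a gap `(a, b)` of the preimage of `K`
(`exists_gap`, `component_subset_gap`). If `fⁿ(x₀) ∈ I`, some lift `H` of `fⁿ` is an increasing
bijection which preserves the preimage of `K` and maps a point of `(a, b)` into `(a, b)`, so it
fixes `a` (`gap_endpoint_fixed`), and then the rotation number is rational
(`C1Diffeo.iterZ_ne_add_int`).

Consequently, for `u` supported in `I`, the derivative `u'` vanishes at every point of the orbit
other than `x₀`, and `∫ u' dν` is `u'(x₀)` times the mass `1/S` of the atom of `ν` at `x₀`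
(`integral_orbitMeasure`); moreover `u` vanishes on `K`, which has full `μ`-measure. Bump functions
inside `I` (`exists_C1_in_component`) realise every value of `u'(x₀)`, and a function with
`∫ u dμ = 0` and `∫ u' dν = 1` excludes proportionality.
-/

open MeasureTheory Function Filter Set
open scoped Topology

noncomputable section

/-! ### Points of the circle and their lifts -/

lemma coe_eq_coe_imp {x y : ℝ} (h : (x : 𝕊) = (y : 𝕊)) : ∃ k : ℤ, x = y + k := by
  have h1 : ((x - y : ℝ) : 𝕊) = 0 := by rw [AddCircle.coe_sub, h, sub_self]
  obtain ⟨k, hk⟩ := (AddCircle.coe_eq_zero_iff 1).1 h1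
  exact ⟨k, by simp at hk; linarith⟩

lemma coe_add_intCast (x : ℝ) (k : ℤ) : ((x + k : ℝ) : 𝕊) = (x : 𝕊) := by
  have h1 : ((k : ℝ) : 𝕊) = 0 := (AddCircle.coe_eq_zero_iff 1).2 ⟨k, by simp⟩
  rw [AddCircle.coe_add, h1, add_zero]

/-! ### Gaps of the minimal set -/

/-- If an increasing bijection `H` of `ℝ` preserves `A` and maps some point of the gap `(a, b)` of
`A` back into that gap, then it fixes the left endpoint: neither `H a` nor `H⁻¹ a` lies in the gap,
as both belong to `A`. -/
lemma gap_endpoint_fixed {A : Set ℝ} {H : ℝ → ℝ} (hmono : StrictMono H) (hsurj : Surjective H)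
    (hA : ∀ y, H y ∈ A ↔ y ∈ A) {a b t : ℝ} (ha : a ∈ A) (hgap : ∀ y ∈ Ioo a b, y ∉ A)
    (ht : t ∈ Ioo a b) (hHt : H t ∈ Ioo a b) : H a = a := by
  apply le_antisymm
  · by_contra! h
    exact hgap (H a) ⟨h, (hmono ht.1).trans hHt.2⟩ ((hA a).2 ha)
  · by_contra! h
    obtain ⟨a', rfl⟩ := hsurj a
    have h1 : H a' < a' := hmono.lt_iff_lt.1 h
    have h2 : a' < t := hmono.lt_iff_lt.1 hHt.1
    exact hgap a' ⟨h1, h2.trans ht.2⟩ ((hA a').1 ha)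

/-- A point outside the preimage of `K` in `ℝ` lies in a gap of it with endpoints in the preimage:
this preimage is closed and, being nonempty and periodic, unbounded in both directions. -/
lemma exists_gap {K : Set 𝕊} (hne : K.Nonempty) (hcl : IsClosed K) (t : ℝ)
    (ht : (t : 𝕊) ∉ K) :
    ∃ a b : ℝ, (a : 𝕊) ∈ K ∧ (b : 𝕊) ∈ K ∧ t ∈ Ioo a b ∧ ∀ y ∈ Ioo a b, (y : 𝕊) ∉ K := by
  have hc : Continuous (fun x : ℝ => (x : 𝕊)) := AddCircle.continuous_mk' 1
  obtain ⟨k, hk⟩ := hne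
  obtain ⟨k, rfl⟩ := QuotientAddGroup.mk_surjective k
  have hshift : ∀ m : ℤ, ((k + m : ℝ) : 𝕊) ∈ K := fun m => by
    rw [coe_add_intCast]; exact hk
  have hA : IsClosed {y : ℝ | (y : 𝕊) ∈ K} := hcl.preimage hc
  have hL : IsClosed ({y : ℝ | (y : 𝕊) ∈ K} ∩ Iic t) := hA.inter isClosed_Iic
  have hR : IsClosed ({y : ℝ | (y : 𝕊) ∈ K} ∩ Ici t) := hA.inter isClosed_Ici
  have hLb : BddAbove ({y : ℝ | (y : 𝕊) ∈ K} ∩ Iic t) := ⟨t, fun y hy => hy.2⟩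
  have hRb : BddBelow ({y : ℝ | (y : 𝕊) ∈ K} ∩ Ici t) := ⟨t, fun y hy => hy.2⟩
  have hLn : ({y : ℝ | (y : 𝕊) ∈ K} ∩ Iic t).Nonempty :=
    ⟨k + ⌊t - k⌋, hshift _, by
      have := Int.floor_le (t - k)
      simp only [mem_Iic]; linarith⟩
  have hRn : ({y : ℝ | (y : 𝕊) ∈ K} ∩ Ici t).Nonempty :=
    ⟨k + ⌈t - k⌉, hshift _, by
      have := Int.le_ceil (t - k)
      simp only [mem_Ici]; linarith⟩
  have ha := hL.csSup_mem hLn hLb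
  have hb := hR.csInf_mem hRn hRb
  refine ⟨_, _, ha.1, hb.1, ⟨lt_of_le_of_ne ha.2 ?_, lt_of_le_of_ne hb.2 ?_⟩, ?_⟩
  · intro h; exact ht (h ▸ ha.1)
  · intro h; exact ht (h ▸ hb.1)
  · intro y hy hyK
    rcases le_total y t with h | h
    · exact absurd (le_csSup hLb ⟨hyK, h⟩) (not_le.2 hy.1)
    · exact absurd (csInf_le hRb ⟨hyK, h⟩) (not_le.2 hy.2)

/-- The component of a point in `Kᶜ` is contained in the projection of the gap around a lift:
the projected open gap and the complement of the projected closed gap are disjoint open sets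
covering `Kᶜ`. -/
lemma component_subset_gap {K : Set 𝕊} {a b t : ℝ} (ha : (a : 𝕊) ∈ K) (hb : (b : 𝕊) ∈ K)
    (ht : t ∈ Ioo a b) (hgap : ∀ y ∈ Ioo a b, (y : 𝕊) ∉ K) :
    connectedComponentIn Kᶜ (t : 𝕊) ⊆ (fun x : ℝ => (x : 𝕊)) '' Ioo a b := by
  have hc : Continuous (fun x : ℝ => (x : 𝕊)) := AddCircle.continuous_mk' 1
  have hopen : IsOpen ((fun x : ℝ => (x : 𝕊)) '' Ioo a b) :=
    QuotientAddGroup.isOpenMap_coe _ isOpen_Ioo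
  have hclosed : IsClosed ((fun x : ℝ => (x : 𝕊)) '' Icc a b) :=
    (isCompact_Icc.image hc).isClosed
  refine isPreconnected_connectedComponentIn.subset_left_of_subset_union hopen
    hclosed.isOpen_compl ?_ ?_ ?_
  · exact disjoint_compl_right_iff_subset.2 (image_mono Ioo_subset_Icc_self)
  · intro x hx
    have hxK := connectedComponentIn_subset _ _ hx
    by_cases h : x ∈ (fun x : ℝ => (x : 𝕊)) '' Icc a b
    · left
      obtain ⟨y, hy, rfl⟩ := h
      refine ⟨y, ⟨lt_of_le_of_ne hy.1 ?_, lt_of_le_of_ne hy.2 ?_⟩, rfl⟩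
      · rintro rfl; exact hxK ha
      · rintro rfl; exact hxK hb
    · exact Or.inr h
  · exact ⟨t, mem_connectedComponentIn (hgap t ht), t, ht, rfl⟩

/-! ### Wandering of the gaps under iteration -/

namespace C1Diffeo

variable (f : C1Diffeo)

lemma F_strictMono : StrictMono f.F := strictMono_of_deriv_pos f.deriv_pos

lemma Finv_strictMono : StrictMono f.Finv := fun x y h => by
  rw [← f.F_strictMono.lt_iff_lt, f.right_inv, f.right_inv]; exact h

lemma iterZ_strictMono (n : ℤ) : StrictMono (f.iterZ n) := by
  cases n with
  | ofNat n => exact f.F_strictMono.iterate n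
  | negSucc n => exact f.Finv_strictMono.iterate (n + 1)

lemma iterZ_surjective (n : ℤ) : Surjective (f.iterZ n) := by
  cases n with
  | ofNat n => exact f.right_inv.surjective.iterate n
  | negSucc n => exact f.left_inv.surjective.iterate (n + 1)

lemma F_mem_iff {K : Set 𝕊} (hK : f.toCircle '' K = K) (y : ℝ) :
    ((f.F y : ℝ) : 𝕊) ∈ K ↔ (y : 𝕊) ∈ K := by
  constructor
  · intro h
    rw [← hK] at h
    obtain ⟨z, hz, hzy⟩ := h
    obtain ⟨z, rfl⟩ := QuotientAddGroup.mk_surjective z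
    have h1 : ((f.F z : ℝ) : 𝕊) = ((f.F y : ℝ) : 𝕊) := hzy
    obtain ⟨m, hm⟩ := coe_eq_coe_imp h1
    have h2 : z = y + m := f.F_strictMono.injective (by
      rw [hm]; exact (f.deg1.map_add_int y m).symm)
    rw [← coe_add_intCast y m, ← h2]; exact hz
  · intro h
    rw [← hK]
    exact ⟨y, h, rfl⟩

lemma iterate_mem_iff {K : Set 𝕊} {G : ℝ → ℝ} (hG : ∀ y, ((G y : ℝ) : 𝕊) ∈ K ↔ (y : 𝕊) ∈ K)
    (n : ℕ) (y : ℝ) : ((G^[n] y : ℝ) : 𝕊) ∈ K ↔ (y : 𝕊) ∈ K := by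
  induction n with
  | zero => rfl
  | succ n ih => rw [iterate_succ_apply', hG, ih]

lemma iterZ_mem_iff {K : Set 𝕊} (hK : f.toCircle '' K = K) (n : ℤ) (y : ℝ) :
    ((f.iterZ n y : ℝ) : 𝕊) ∈ K ↔ (y : 𝕊) ∈ K := by
  cases n with
  | ofNat n => exact iterate_mem_iff (f.F_mem_iff hK) n y
  | negSucc n =>
    refine iterate_mem_iff (fun z => ?_) (n + 1) y
    rw [← f.F_mem_iff hK, f.right_inv]

/-- A nontrivial iterate of a diffeomorphism of irrational rotation number has no fixed point on
the circle. -/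
lemma iterZ_ne_add_int (hirr : Irrational f.rot) {n : ℤ} (hn : n ≠ 0) (a : ℝ) (k : ℤ) :
    f.iterZ n a ≠ a + k := by
  have key : ∀ (m : ℕ), m ≠ 0 → ∀ (b : ℝ) (j : ℤ), f.F^[m] b ≠ b + j := by
    intro m hm b j h
    have h1 : (f.deg1 ^ m) b = b + j := by
      rw [CircleDeg1Lift.coe_pow]; exact h
    have h2 := CircleDeg1Lift.translationNumber_of_eq_add_int _ h1
    rw [CircleDeg1Lift.translationNumber_pow] at h2
    refine (hirr.natCast_mul hm).ne_int j h2
  cases n with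
  | ofNat n => exact key n (by simpa using hn) a k
  | negSucc n =>
    intro h
    refine key (n + 1) (by simp) (a + k) (-k) ?_
    have h1 : f.F^[n + 1] (f.iterZ (Int.negSucc n) a) = a := f.right_inv.iterate (n + 1) a
    rw [← h, h1, h]; push_cast; ring

/-- Components of the complement of an invariant closed set are wandering: no nontrivial iterate
brings a point back to its own component, since it would fix the endpoints of the component. -/
lemma mapZ_notMem_component (hirr : Irrational f.rot) {K : Set 𝕊} (hne : K.Nonempty)
    (hcl : IsClosed K) (hK : f.toCircle '' K = K) (t : ℝ) (ht : (t : 𝕊) ∉ K) {n : ℤ}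
    (hn : n ≠ 0) : f.mapZ n (t : 𝕊) ∉ connectedComponentIn Kᶜ (t : 𝕊) := by
  intro hmem
  obtain ⟨a, b, ha, hb, htab, hgap⟩ := exists_gap hne hcl t ht
  obtain ⟨s, hs, hst⟩ := component_subset_gap ha hb htab hgap hmem
  have h1 : (s : 𝕊) = ((f.iterZ n t : ℝ) : 𝕊) := hst
  obtain ⟨k, hk⟩ := coe_eq_coe_imp h1
  have hfix := gap_endpoint_fixed (A := {y : ℝ | (y : 𝕊) ∈ K}) (H := fun y => f.iterZ n y + k)
    (fun x y h => by simpa using f.iterZ_strictMono n h)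
    (fun y => by
      obtain ⟨x, hx⟩ := f.iterZ_surjective n (y - k)
      exact ⟨x, by simp [hx]⟩)
    (fun y => by
      show ((f.iterZ n y + k : ℝ) : 𝕊) ∈ K ↔ (y : 𝕊) ∈ K
      rw [coe_add_intCast, f.iterZ_mem_iff hK])
    ha hgap htab (by simpa [← hk] using hs)
  refine f.iterZ_ne_add_int hirr hn a (-k) ?_
  push_cast; linarith

lemma DfZ_zero (x : 𝕊) : f.DfZ 0 x = 1 := by
  obtain ⟨t, rfl⟩ := QuotientAddGroup.mk_surjective x
  show deriv (f.iterZ 0) t = 1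
  have : f.iterZ 0 = id := rfl
  rw [this, deriv_id]

lemma DfZ_nonneg (n : ℤ) (x : 𝕊) : 0 ≤ f.DfZ n x := by
  obtain ⟨t, rfl⟩ := QuotientAddGroup.mk_surjective x
  exact (f.iterZ_strictMono n).monotone.deriv_nonneg

lemma mapZ_zero (x : 𝕊) : f.mapZ 0 x = x := by
  obtain ⟨t, rfl⟩ := QuotientAddGroup.mk_surjective x
  rfl

end C1Diffeo

/-! ### Integration against the orbit measure -/

lemma derivS_eq_zero_of_notMem_tsupport {u : 𝕊 → ℝ} {x : 𝕊} (hx : x ∉ tsupport u) :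
    derivS u x = 0 := by
  obtain ⟨t, rfl⟩ := QuotientAddGroup.mk_surjective x
  show deriv (lft u) t = 0
  have hc : Continuous (fun x : ℝ => (x : 𝕊)) := AddCircle.continuous_mk' 1
  have h : lft u =ᶠ[𝓝 t] fun _ => 0 :=
    hc.continuousAt.eventually (notMem_tsupport_iff_eventuallyEq.1 hx)
  rw [h.deriv_eq, deriv_const]

/-- If `g` vanishes on the orbit of `x₀` away from `x₀` itself, and `x₀` is not periodic,
then `∫ g dν` only sees the atom of `ν` at `x₀`, whose mass is `1/S`. -/
lemma integral_orbitMeasure (f : C1Diffeo) (x₀ : 𝕊) (hper : ∀ n : ℤ, n ≠ 0 → f.mapZ n x₀ ≠ x₀)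
    (g : 𝕊 → ℝ) (hg : ∀ n : ℤ, n ≠ 0 → g (f.mapZ n x₀) = 0) :
    ∫ x, g x ∂(orbitMeasure f x₀) = g x₀ / orbitSum f x₀ := by
  have hS0 : 0 ≤ orbitSum f x₀ := tsum_nonneg fun n => f.DfZ_nonneg n x₀
  rw [orbitMeasure, integral_smul_measure]
  have hae : g =ᵐ[Measure.sum fun n : ℤ => ENNReal.ofReal (f.DfZ n x₀) •
      Measure.dirac (f.mapZ n x₀)] ({x₀} : Set 𝕊).indicator fun _ => g x₀ := by
    refine Measure.ae_sum_iff.2 fun n => Measure.ae_smul_measure ?_ _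
    rw [ae_dirac_eq]
    by_cases hn : n = 0
    · subst hn
      simp [f.mapZ_zero]
    · simp [hg n hn, hper n hn]
  have hmass : (Measure.sum fun n : ℤ => ENNReal.ofReal (f.DfZ n x₀) •
      Measure.dirac (f.mapZ n x₀)) {x₀} = 1 := by
    rw [Measure.sum_apply _ (measurableSet_singleton x₀), tsum_eq_single 0]
    · simp [f.mapZ_zero, f.DfZ_zero]
    · intro n hn
      simp [hper n hn]
  rw [integral_congr_ae hae, integral_indicator_const _ (measurableSet_singleton x₀),
    Measure.real, hmass, ENNReal.toReal_inv, ENNReal.toReal_ofReal hS0]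
  simp [div_eq_inv_mul]

/-! ### Test functions supported in a gap -/

/-- A `C¹` function on the circle supported in the closed `δ`-neighbourhood of `t`, with derivative
`1` at `t`: the descent of `sin (2π(x-t)) ψ(cos (2π(x-t))) / 2π`, where `ψ` is a smooth function
vanishing on `(-∞, cos 2πδ]` and equal to `1` at `1`. -/
lemma exists_bump (t δ : ℝ) (hδ : 0 < δ) (hδ' : δ ≤ 1 / 2) :
    ∃ u : 𝕊 → ℝ, IsC1 u ∧ tsupport u ⊆ (fun x : ℝ => (x : 𝕊)) '' Icc (t - δ) (t + δ) ∧
      derivS u (t : 𝕊) = 1 := by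
  have hπ := Real.pi_pos
  set c := Real.cos (2 * Real.pi * δ) with hcdef
  have hanti := Real.strictAntiOn_cos
  have hc1 : c < 1 := by
    rw [← Real.cos_zero]
    exact hanti ⟨le_rfl, hπ.le⟩ ⟨by positivity, by nlinarith⟩ (by positivity)
  let ψ : ℝ → ℝ := fun y => Real.smoothTransition ((y - c) / (1 - c))
  have hψ : ContDiff ℝ 1 ψ := Real.smoothTransition.contDiff.comp (by fun_prop)
  have hψ1 : ψ 1 = 1 := by
    simp only [ψ]; rw [div_self (by linarith)]; exact Real.smoothTransition.one
  have hψ0 : ∀ y ≤ c, ψ y = 0 := fun y hy =>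
    Real.smoothTransition.zero_of_nonpos (div_nonpos_of_nonpos_of_nonneg (by linarith)
      (by linarith))
  let w : ℝ → ℝ := fun x =>
    (2 * Real.pi)⁻¹ * (Real.sin (2 * Real.pi * (x - t)) * ψ (Real.cos (2 * Real.pi * (x - t))))
  have hwper : Function.Periodic w 1 := fun x => by
    simp only [w]
    rw [show 2 * Real.pi * (x + 1 - t) = 2 * Real.pi * (x - t) + 2 * Real.pi by ring,
      Real.sin_add_two_pi, Real.cos_add_two_pi]
  have hwC : ContDiff ℝ 1 w := by
    have h1 : ContDiff ℝ 1 fun x => 2 * Real.pi * (x - t) := by fun_prop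
    exact contDiff_const.mul ((Real.contDiff_sin.comp h1).mul
      (hψ.comp (Real.contDiff_cos.comp h1)))
  have hlft : lft hwper.lift = w := rfl
  refine ⟨hwper.lift, by rw [IsC1, hlft]; exact hwC, ?_, ?_⟩
  · refine closure_minimal ?_ (isCompact_Icc.image (AddCircle.continuous_mk' 1)).isClosed
    intro x hx
    obtain ⟨y, rfl⟩ := QuotientAddGroup.mk_surjective x
    have hwy : w y ≠ 0 := hx
    have hcos : c < Real.cos (2 * Real.pi * (y - t)) := by
      by_contra! h
      exact hwy (by simp [w, hψ0 _ h])
    -- Translating by the nearest integer brings the argument of `cos` into `[-π, π]`, where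
    -- `cos` of the absolute value is injective.
    set k := round (y - t) with hk
    have habs : |y - t - k| ≤ 1 / 2 := abs_sub_round _
    have hcos' : c < Real.cos (2 * Real.pi * |y - t - k|) := by
      have h2 : Real.cos (2 * Real.pi * |y - t - k|) = Real.cos (2 * Real.pi * (y - t)) := by
        rw [show 2 * Real.pi * |y - t - k| = |2 * Real.pi * (y - t - k)| by
          rw [abs_mul, abs_of_pos (by positivity : 0 < 2 * Real.pi)], Real.cos_abs,
          show 2 * Real.pi * (y - t - k) = 2 * Real.pi * (y - t) - k * (2 * Real.pi) by ring,
          Real.cos_sub_int_mul_two_pi]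
      rw [h2]; exact hcos
    have hlt := (hanti.lt_iff_gt ⟨by positivity, by nlinarith⟩
      ⟨by positivity, by nlinarith⟩).1 hcos'
    have hlt' : |y - t - k| < δ := by
      by_contra! h; nlinarith
    rw [abs_lt] at hlt'
    refine ⟨y + (-k : ℤ), ⟨?_, ?_⟩, coe_add_intCast _ _⟩ <;> push_cast <;> linarith
  · show deriv (lft hwper.lift) t = 1
    rw [hlft]
    have h1 : HasDerivAt (fun x : ℝ => 2 * Real.pi * (x - t)) (2 * Real.pi) t := by
      simpa using ((hasDerivAt_id t).sub_const t).const_mul (2 * Real.pi)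
    have h2 : HasDerivAt (fun x : ℝ => ψ (Real.cos (2 * Real.pi * (x - t)))) _ t :=
      DifferentiableAt.hasDerivAt (((hψ.differentiable one_ne_zero).comp
        (Real.differentiable_cos.comp (by fun_prop))) t)
    have h3 := (h1.sin.mul h2).const_mul ((2 * Real.pi)⁻¹)
    refine (HasDerivAt.deriv (f := w) h3).trans ?_
    simp [hψ1]
    field_simp

/-- There are test functions with prescribed derivative at `x₀`, supported in
the component of `x₀` in the open set `Kᶜ`. -/
lemma exists_C1_in_component {K : Set 𝕊} (hcl : IsClosed K) (x₀ : 𝕊) (hx₀ : x₀ ∉ K) (r : ℝ) :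
    ∃ u : 𝕊 → ℝ, IsC1 u ∧ tsupport u ⊆ connectedComponentIn Kᶜ x₀ ∧ derivS u x₀ = r := by
  obtain ⟨t, rfl⟩ := QuotientAddGroup.mk_surjective x₀
  have hc : Continuous (fun x : ℝ => (x : 𝕊)) := AddCircle.continuous_mk' 1
  obtain ⟨ε, hε, hball⟩ := Metric.isOpen_iff.1 (hcl.isOpen_compl.preimage hc) t hx₀
  obtain ⟨u, hu, hsu, hdu⟩ := exists_bump t (min (ε / 2) (1 / 2)) (by positivity)
    (min_le_right _ _)
  have hsub : (fun x : ℝ => (x : 𝕊)) '' Icc (t - min (ε / 2) (1 / 2)) (t + min (ε / 2) (1 / 2)) ⊆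
      connectedComponentIn Kᶜ (t : 𝕊) := by
    refine (isPreconnected_Icc.image _ hc.continuousOn).subset_connectedComponentIn
      ⟨t, ⟨?_, ?_⟩, rfl⟩ ?_
    · have : 0 < min (ε / 2) (1 / 2) := by positivity
      linarith
    · have : 0 < min (ε / 2) (1 / 2) := by positivity
      linarith
    · rintro _ ⟨y, hy, rfl⟩
      refine hball ?_
      have h := min_le_left (ε / 2) (1 / 2 : ℝ)
      rw [Metric.mem_ball, Real.dist_eq, abs_lt]
      constructor <;> linarith [hy.1, hy.2]
  refine ⟨r • u, ?_, ?_, ?_⟩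
  · exact contDiff_const.mul hu
  · exact (closure_mono (support_const_smul_subset r u)).trans (hsu.trans hsub)
  · show deriv (fun y => r * lft u y) t = r
    have hd : deriv (lft u) t = 1 := hdu
    rw [deriv_const_mul _ (hu.differentiable one_ne_zero t), hd, mul_one]

/-- For a Denjoy counter-example `f` with minimal invariant Cantor set `K` (supporting the
invariant measure `μ`) and a point `x₀ ∉ K` with `S := Σ_{n ∈ ℤ} D(fⁿ)(x₀) < ∞`, the invariant
1-distribution `L(u) := ∫ u' dν` associated with `ν := S⁻¹ Σ D(fⁿ)(x₀) δ_{fⁿ(x₀)}` satisfies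
`∫ u dμ = 0` and `L(u) = u'(x₀)/S` for every `C¹` function `u` supported in the connected
component `I` of `Kᶜ` containing `x₀`; in particular `L` attains every real value on `C¹`
functions of zero `μ`-mean, and `L` is not a scalar multiple of integration against `μ`. -/
theorem denjoy_distribution_not_multiple_of_invariant_measure
    (f : C1Diffeo) (hirr : Irrational f.rot)
    (K : Set 𝕊) (hK : IsMinimalInvariantCantor f K)
    (μ : Measure 𝕊) [IsProbabilityMeasure μ] (hinv : MeasurePreserving f.toCircle μ μ)
    (hsupp : μ Kᶜ = 0)
    (x₀ : 𝕊) (hx₀ : x₀ ∉ K)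
    (hS : Summable fun n : ℤ => f.DfZ n x₀) :
    (∀ u : 𝕊 → ℝ, IsC1 u → tsupport u ⊆ connectedComponentIn Kᶜ x₀ →
      ∫ x, u x ∂μ = 0 ∧
        ∫ x, derivS u x ∂(orbitMeasure f x₀) = derivS u x₀ / orbitSum f x₀) ∧
    (∀ r : ℝ, ∃ u : 𝕊 → ℝ, IsC1 u ∧ ∫ x, u x ∂μ = 0 ∧
      ∫ x, derivS u x ∂(orbitMeasure f x₀) = r) ∧
    ¬ ∃ c : ℝ, ∀ u : 𝕊 → ℝ, IsC1 u →
      ∫ x, derivS u x ∂(orbitMeasure f x₀) = c * ∫ x, u x ∂μ := by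
  have hcl : IsClosed K := hK.2.1.closed
  have hwand : ∀ n : ℤ, n ≠ 0 → f.mapZ n x₀ ∉ connectedComponentIn Kᶜ x₀ := by
    intro n hn
    obtain ⟨t, rfl⟩ := QuotientAddGroup.mk_surjective x₀
    exact f.mapZ_notMem_component hirr hK.1 hcl hK.2.2.2.1 t hx₀ hn
  have hper : ∀ n : ℤ, n ≠ 0 → f.mapZ n x₀ ≠ x₀ := fun n hn h =>
    hwand n hn (h.symm ▸ mem_connectedComponentIn hx₀)
  have part1 : ∀ u : 𝕊 → ℝ, IsC1 u → tsupport u ⊆ connectedComponentIn Kᶜ x₀ →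
      ∫ x, u x ∂μ = 0 ∧
        ∫ x, derivS u x ∂(orbitMeasure f x₀) = derivS u x₀ / orbitSum f x₀ := by
    intro u _ hsu
    constructor
    · refine integral_eq_zero_of_ae ?_
      have hKae : ∀ᵐ x ∂μ, x ∈ K := hsupp
      filter_upwards [hKae] with x hx
      by_contra h
      exact connectedComponentIn_subset _ _ (hsu (subset_tsupport u h)) hx
    · exact integral_orbitMeasure f x₀ hper _ fun n hn =>
        derivS_eq_zero_of_notMem_tsupport fun h => hwand n hn (hsu h)
  have part2 : ∀ r : ℝ, ∃ u : 𝕊 → ℝ, IsC1 u ∧ ∫ x, u x ∂μ = 0 ∧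
      ∫ x, derivS u x ∂(orbitMeasure f x₀) = r := by
    intro r
    -- `S ≥ D(f⁰)(x₀) = 1`, so division by `S` is genuine.
    have hSpos : 0 < orbitSum f x₀ := hS.tsum_pos (fun n => f.DfZ_nonneg n x₀) 0
      (by rw [f.DfZ_zero]; exact one_pos)
    obtain ⟨u, hu, hsu, hdu⟩ := exists_C1_in_component hcl x₀ hx₀ (r * orbitSum f x₀)
    refine ⟨u, hu, (part1 u hu hsu).1, ?_⟩
    rw [(part1 u hu hsu).2, hdu, mul_div_cancel_right₀ _ hSpos.ne']
  refine ⟨part1, part2, ?_⟩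
  rintro ⟨c, hc⟩
  obtain ⟨u, hu, hu0, hu1⟩ := part2 1
  have h := hc u hu
  rw [hu0, hu1, mul_zero] at h
  exact one_ne_zero h
end
end
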